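/- arXiv:1810.11616 — 12 statements merged into one kernel-verified Lean document; each statement's English description precedes it below -/
import Mathlib

section
/- Let N ≥ 1, let p > 1 be a real number, and let A : ℝ^N → ℝ be strictly convex, positively p-homogeneous, with A(ξ) > 0 for ξ ≠ 0 and A(0) = 0. Define N₁(ξ) = A(ξ)^(1/p). Then for every t ∈ [0,1] and all ξ₁, ξ₂ ∈ ℝ^N one has N₁((1−t)ξ₁ + t ξ₂) ≤ max(N₁(ξ₁), N₁(ξ₂)); moreover, for t ∈ (0,1) this inequality is strict unless ξ₁ = λ • ξ₂ for some λ > 0. -/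
open Real

theorem picone_N1_max_ineq
    (N : ℕ) (hN : 1 ≤ N) (p : ℝ) (hp : 1 < p)
    (A : EuclideanSpace ℝ (Fin N) → ℝ)
    (hconv : StrictConvexOn ℝ Set.univ A)
    (hhom : ∀ t : ℝ, 0 ≤ t → ∀ ξ : EuclideanSpace ℝ (Fin N), A (t • ξ) = t ^ p * A ξ)
    (hpos : ∀ ξ : EuclideanSpace ℝ (Fin N), ξ ≠ 0 → 0 < A ξ)
    (hzero : A 0 = 0) :
    (∀ t ∈ Set.Icc (0:ℝ) 1, ∀ ξ₁ ξ₂ : EuclideanSpace ℝ (Fin N),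
      (A ((1 - t) • ξ₁ + t • ξ₂)) ^ (1/p) ≤ max ((A ξ₁) ^ (1/p)) ((A ξ₂) ^ (1/p))) ∧
    (∀ t ∈ Set.Ioo (0:ℝ) 1, ∀ ξ₁ ξ₂ : EuclideanSpace ℝ (Fin N),
      (¬ ∃ l : ℝ, 0 < l ∧ ξ₁ = l • ξ₂) →
      (A ((1 - t) • ξ₁ + t • ξ₂)) ^ (1/p) < max ((A ξ₁) ^ (1/p)) ((A ξ₂) ^ (1/p))) := by
  have hnn : ∀ ξ, 0 ≤ A ξ := by
    intro ξ
    by_cases h : ξ = 0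
    · rw [h, hzero]
    · exact (hpos ξ h).le
  have hq : 0 < 1 / p := by positivity
  constructor
  · intro t ht ξ₁ ξ₂
    have h := hconv.convexOn.le_max_of_mem_segment (x := ξ₁) (y := ξ₂)
      (z := (1 - t) • ξ₁ + t • ξ₂) (Set.mem_univ _) (Set.mem_univ _)
      ⟨1 - t, t, by linarith [ht.2], ht.1, by ring, rfl⟩
    rcases le_max_iff.1 h with h | h
    · exact le_max_of_le_left (Real.rpow_le_rpow (hnn _) h hq.le)
    · exact le_max_of_le_right (Real.rpow_le_rpow (hnn _) h hq.le)
  · intro t ht ξ₁ ξ₂ hne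
    have hne' : ξ₁ ≠ ξ₂ := fun h => hne ⟨1, one_pos, by rw [h, one_smul]⟩
    have h := hconv.lt_on_open_segment' (Set.mem_univ _) (Set.mem_univ _) hne'
      (a := 1 - t) (b := t) (by linarith [ht.2]) ht.1 (by ring)
    rcases lt_max_iff.1 h with h | h
    · exact lt_max_of_lt_left (Real.rpow_lt_rpow (hnn _) h hq)
    · exact lt_max_of_lt_right (Real.rpow_lt_rpow (hnn _) h hq)
end

section
/- Let N ≥ 1, let p > 1 be a real number, and let A : ℝ^N → ℝ be strictly convex, positively p-homogeneous, with A(ξ) > 0 for ξ ≠ 0 and A(0) = 0. Define N₁(ξ) = A(ξ)^(1/p). Then N₁ is subadditive: N₁(ξ₁ + ξ₂) ≤ N₁(ξ₁) + N₁(ξ₂) for all ξ₁, ξ₂ ∈ ℝ^N. -/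
open Real

theorem picone_N1_subadditive
    (N : ℕ) (hN : 1 ≤ N) (p : ℝ) (hp : 1 < p)
    (A : EuclideanSpace ℝ (Fin N) → ℝ)
    (hconv : StrictConvexOn ℝ Set.univ A)
    (hhom : ∀ t : ℝ, 0 ≤ t → ∀ ξ : EuclideanSpace ℝ (Fin N), A (t • ξ) = t ^ p * A ξ)
    (hpos : ∀ ξ : EuclideanSpace ℝ (Fin N), ξ ≠ 0 → 0 < A ξ)
    (hzero : A 0 = 0) :
    ∀ ξ₁ ξ₂ : EuclideanSpace ℝ (Fin N),
      (A (ξ₁ + ξ₂)) ^ (1/p) ≤ (A ξ₁) ^ (1/p) + (A ξ₂) ^ (1/p) := by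
  intro x y
  have hp0 : p ≠ 0 := by linarith
  have hip : 1 / p ≠ 0 := one_div_ne_zero hp0
  by_cases hx : x = 0
  · subst hx
    simp [hzero, Real.zero_rpow (inv_ne_zero hp0)]
  by_cases hy : y = 0
  · subst hy
    simp [hzero, Real.zero_rpow (inv_ne_zero hp0)]
  have key : ∀ z, z ≠ 0 → 0 < (A z) ^ (1/p) ∧ A (((A z) ^ (1/p))⁻¹ • z) = 1 := by
    intro z hz
    have hA := hpos z hz
    have h1 : 0 < (A z) ^ (1/p) := Real.rpow_pos_of_pos hA _
    refine ⟨h1, ?_⟩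
    rw [hhom _ (inv_nonneg.2 h1.le), Real.inv_rpow h1.le, ← Real.rpow_mul hA.le,
      one_div_mul_cancel hp0, Real.rpow_one, inv_mul_cancel₀ hA.ne']
  obtain ⟨ha, hax⟩ := key x hx
  obtain ⟨hb, hby⟩ := key y hy
  set a := (A x) ^ (1/p)
  set b := (A y) ^ (1/p)
  have hs : 0 < a + b := add_pos ha hb
  have hc := hconv.convexOn.2 (Set.mem_univ (a⁻¹ • x)) (Set.mem_univ (b⁻¹ • y))
    (div_pos ha hs).le (div_pos hb hs).le (by field_simp)
  rw [hax, hby] at hc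
  have e1 : (a / (a + b)) • a⁻¹ • x + (b / (a + b)) • b⁻¹ • y = (a + b)⁻¹ • (x + y) := by
    rw [smul_smul, smul_smul, smul_add]
    congr 2 <;> field_simp
  have e2 : (a / (a + b)) • (1:ℝ) + (b / (a + b)) • (1:ℝ) = 1 := by
    simp only [smul_eq_mul]
    field_simp
  rw [e1, e2] at hc
  have h3 : A (x + y) ≤ (a + b) ^ p := by
    have : x + y = (a + b) • ((a + b)⁻¹ • (x + y)) := by
      rw [smul_smul, mul_inv_cancel₀ hs.ne', one_smul]
    rw [this, hhom _ hs.le]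
    exact mul_le_of_le_one_right (Real.rpow_nonneg hs.le _) hc
  have h0 : 0 ≤ A (x + y) := by
    by_cases h : x + y = 0
    · rw [h, hzero]
    · exact (hpos _ h).le
  calc (A (x + y)) ^ (1/p) ≤ ((a + b) ^ p) ^ (1/p) :=
        Real.rpow_le_rpow h0 h3 (by positivity)
    _ = a + b := by
        rw [← Real.rpow_mul hs.le, mul_one_div_cancel hp0, Real.rpow_one]
end

section
/- Let N ≥ 1, let p > 1 and r > 1 be real numbers, and let A : ℝ^N → ℝ be strictly convex, positively p-homogeneous, with A(ξ) > 0 for ξ ≠ 0 and A(0) = 0. Then N_r(ξ) = A(ξ)^(r/p) is positively r-homogeneous and strictly convex on ℝ^N. -/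
open Real

theorem picone_Nr_strictly_convex
    (N : ℕ) (hN : 1 ≤ N) (p r : ℝ) (hp : 1 < p) (hr : 1 < r)
    (A : EuclideanSpace ℝ (Fin N) → ℝ)
    (hconv : StrictConvexOn ℝ Set.univ A)
    (hhom : ∀ t : ℝ, 0 ≤ t → ∀ ξ : EuclideanSpace ℝ (Fin N), A (t • ξ) = t ^ p * A ξ)
    (hpos : ∀ ξ : EuclideanSpace ℝ (Fin N), ξ ≠ 0 → 0 < A ξ)
    (hzero : A 0 = 0) :
    (∀ t : ℝ, 0 ≤ t → ∀ ξ : EuclideanSpace ℝ (Fin N),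
      (A (t • ξ)) ^ (r/p) = t ^ r * (A ξ) ^ (r/p)) ∧
    StrictConvexOn ℝ Set.univ (fun ξ => (A ξ) ^ (r/p)) := by
  have hp0 : 0 < p := by linarith
  have hnn : ∀ ξ, 0 ≤ A ξ := by
    intro ξ
    by_cases h : ξ = 0
    · rw [h, hzero]
    · exact (hpos ξ h).le
  have hrp : 0 < r / p := by positivity
  have hMnn : ∀ ξ, 0 ≤ A ξ ^ (1/p) := fun ξ => rpow_nonneg (hnn ξ) _
  have hMp : ∀ ξ, (A ξ ^ (1/p)) ^ p = A ξ := by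
    intro ξ
    rw [← rpow_mul (hnn ξ), one_div_mul_cancel hp0.ne', rpow_one]
  have hMr : ∀ ξ, (A ξ ^ (1/p)) ^ r = A ξ ^ (r/p) := by
    intro ξ
    rw [← rpow_mul (hnn ξ)]
    congr 1
    ring
  have hMhom : ∀ t : ℝ, 0 ≤ t → ∀ ξ, A (t • ξ) ^ (1/p) = t * A ξ ^ (1/p) := by
    intro t ht ξ
    rw [hhom t ht, mul_rpow (rpow_nonneg ht _) (hnn ξ), ← rpow_mul ht,
      mul_one_div_cancel hp0.ne', rpow_one]
  have hMpos : ∀ ξ, ξ ≠ 0 → 0 < A ξ ^ (1/p) := fun ξ h => rpow_pos_of_pos (hpos ξ h) _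
  refine ⟨?_, convex_univ, ?_⟩
  · intro t ht ξ
    rw [← hMr, hMhom t ht, mul_rpow ht (hMnn ξ), hMr]
  intro x _ y _ hxy a b ha hb hab
  simp only [smul_eq_mul]
  by_cases hE : A x ^ (1/p) = A y ^ (1/p)
  · have hA : A x = A y := by rw [← hMp x, ← hMp y, hE]
    have h := hconv.2 (Set.mem_univ x) (Set.mem_univ y) hxy ha hb hab
    simp only [smul_eq_mul] at h
    rw [← hA, ← add_mul, hab, one_mul] at h
    rw [← hA, ← add_mul, hab, one_mul]
    exact rpow_lt_rpow (hnn _) h hrp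
  have hsub : A (a • x + b • y) ^ (1/p) ≤ a * A x ^ (1/p) + b * A y ^ (1/p) := by
    by_cases hx : x = 0
    · subst hx
      rw [smul_zero, zero_add, hMhom b hb.le]
      have := mul_nonneg ha.le (hMnn 0)
      linarith
    by_cases hy : y = 0
    · subst hy
      rw [smul_zero, add_zero, hMhom a ha.le]
      have := mul_nonneg hb.le (hMnn 0)
      linarith
    have h1 := hMpos x hx
    have h2 := hMpos y hy
    have hone : ∀ ξ, ξ ≠ 0 → A ((A ξ ^ (1/p))⁻¹ • ξ) = 1 := by
      intro ξ h
      rw [← hMp ((A ξ ^ (1/p))⁻¹ • ξ), hMhom _ (inv_nonneg.2 (hMnn ξ)),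
        inv_mul_cancel₀ (hMpos ξ h).ne', one_rpow]
    have hx1 := hone x hx
    have hy1 := hone y hy
    generalize A x ^ (1/p) = m at *
    generalize A y ^ (1/p) = n at *
    have hs : 0 < a * m + b * n := by positivity
    have hc := hconv.convexOn.2 (Set.mem_univ (m⁻¹ • x)) (Set.mem_univ (n⁻¹ • y))
      (by positivity : 0 ≤ a * m / (a * m + b * n))
      (by positivity : 0 ≤ b * n / (a * m + b * n)) (by field_simp)
    rw [hx1, hy1] at hc
    have hc' : A ((a * m / (a * m + b * n)) • m⁻¹ • x + (b * n / (a * m + b * n)) • n⁻¹ • y) ≤ 1 := by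
      refine hc.trans (le_of_eq ?_)
      simp only [smul_eq_mul]
      field_simp
    have he : a • x + b • y = (a * m + b * n) •
        ((a * m / (a * m + b * n)) • m⁻¹ • x + (b * n / (a * m + b * n)) • n⁻¹ • y) := by
      simp only [smul_add, smul_smul]
      congr 2 <;> field_simp
    rw [he, hMhom _ hs.le]
    have := rpow_le_one (hnn _) hc' (by positivity : 0 ≤ 1 / p)
    exact mul_le_of_le_one_right hs.le this
  have hst := (strictConvexOn_rpow hr).2 (Set.mem_Ici.2 (hMnn x)) (Set.mem_Ici.2 (hMnn y)) hE ha hb hab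
  simp only [smul_eq_mul] at hst
  rw [hMr, hMr] at hst
  rw [← hMr (a • x + b • y)]
  exact (rpow_le_rpow (hMnn _) hsub (by linarith)).trans_lt hst
end

section
/- Let N ≥ 1, let Ω ⊆ ℝ^N be open, let p : Ω → ℝ satisfy p(x) > 1 for all x, and let A : Ω × ℝ^N → ℝ be such that for every x ∈ Ω the map ξ ↦ A(x,ξ) is strictly convex, positively p(x)-homogeneous, and differentiable on ℝ^N. Let r ≥ 1 be a real number and let v, v₀ : Ω → ℝ be positive differentiable functions. Then for every x₀ ∈ Ω at which ∇(v₀^(1/r))(x₀) ≠ 0 one has (1/p(x₀)) · ⟨∇_ξ A(x₀, ∇(v₀^(1/r))(x₀)), ∇(v / v₀^((r−1)/r))(x₀)⟩ ≤ A(x₀, ∇(v^(1/r))(x₀))^(r/p(x₀)) · A(x₀, ∇(v₀^(1/r))(x₀))^((p(x₀)−r)/p(x₀)). (Picone identity for variable exponent operators.) -/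
open Real
open scoped RealInnerProductSpace

lemma aux_pos {E : Type*} [NormedAddCommGroup E] [InnerProductSpace ℝ E]
    (A : E → ℝ) (p : ℝ) (hp : 1 < p) (hc : StrictConvexOn ℝ Set.univ A)
    (hh : ∀ t : ℝ, 0 ≤ t → ∀ ξ : E, A (t • ξ) = t ^ p * A ξ) (ξ : E) (hξ : ξ ≠ 0) : 0 < A ξ := by
  have h0 : A 0 = 0 := by
    have := hh 0 le_rfl 0
    rwa [zero_rpow (by linarith), zero_mul, smul_zero] at this
  have h1 := hc.2 (Set.mem_univ ξ) (Set.mem_univ 0) hξ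
    (show (0:ℝ) < 1/2 by norm_num) (show (0:ℝ) < 1/2 by norm_num) (by norm_num)
  rw [smul_zero, add_zero, hh _ (by norm_num), h0] at h1
  have h2 : (1/2:ℝ) ^ p < (1/2:ℝ) ^ (1:ℝ) :=
    rpow_lt_rpow_of_exponent_gt (by norm_num) (by norm_num) hp
  rw [rpow_one] at h2
  simp only [smul_eq_mul, mul_zero, add_zero] at h1
  by_contra hn
  nlinarith

lemma aux_euler {E : Type*} [NormedAddCommGroup E] [InnerProductSpace ℝ E]
    (A : E → ℝ) (p : ℝ)
    (hh : ∀ t : ℝ, 0 ≤ t → ∀ ξ : E, A (t • ξ) = t ^ p * A ξ) (hd : Differentiable ℝ A) (ξ : E) :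
    fderiv ℝ A ξ ξ = p * A ξ := by
  have h1 : HasDerivAt (fun t : ℝ => A (t • ξ)) (fderiv ℝ A ξ ξ) 1 := by
    have h := (hd ((1:ℝ) • ξ)).hasFDerivAt.comp_hasDerivAt (1:ℝ) ((hasDerivAt_id (1:ℝ)).smul_const ξ)
    simpa [Function.comp_def] using h
  have h2 : HasDerivAt (fun t : ℝ => t ^ p * A ξ) (p * A ξ) 1 := by
    have h := ((Real.hasDerivAt_rpow_const (x := 1) (p := p) (Or.inl one_ne_zero)).mul_const (A ξ))
    simpa using h
  have h3 : (fun t : ℝ => A (t • ξ)) =ᶠ[nhds 1] (fun t : ℝ => t ^ p * A ξ) := by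
    filter_upwards [lt_mem_nhds (zero_lt_one' ℝ)] with t ht
    exact hh t ht.le ξ
  exact h1.unique (h2.congr_of_eventuallyEq h3)

lemma aux_conv {E : Type*} [NormedAddCommGroup E] [InnerProductSpace ℝ E]
    (A : E → ℝ) (hc : ConvexOn ℝ Set.univ A) (hd : Differentiable ℝ A) (ξ η : E) :
    A ξ + fderiv ℝ A ξ (η - ξ) ≤ A η := by
  have hcv : ConvexOn ℝ Set.univ (fun t : ℝ => A (AffineMap.lineMap ξ η t)) := by
    simpa [Function.comp_def] using hc.comp_affineMap (AffineMap.lineMap (k := ℝ) ξ η)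
  have h1 : HasDerivAt (fun t : ℝ => A (AffineMap.lineMap ξ η t)) (fderiv ℝ A ξ (η - ξ)) 0 := by
    have h := (hd (AffineMap.lineMap ξ η (0:ℝ))).hasFDerivAt.comp_hasDerivAt (0:ℝ)
      (AffineMap.hasDerivAt_lineMap (a := ξ) (b := η))
    simpa [Function.comp_def] using h
  have := hcv.le_slope_of_hasDerivAt (Set.mem_univ 0) (Set.mem_univ 1) zero_lt_one h1
  simp [slope_def_field] at this
  rw [map_sub]
  linarith

lemma aux_key {E : Type*} [NormedAddCommGroup E] [InnerProductSpace ℝ E]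
    (A : E → ℝ) (p : ℝ) (hp : 1 < p) (hc : StrictConvexOn ℝ Set.univ A)
    (hh : ∀ t : ℝ, 0 ≤ t → ∀ ξ : E, A (t • ξ) = t ^ p * A ξ) (hd : Differentiable ℝ A)
    (ξ η : E) (hξ : ξ ≠ 0) :
    fderiv ℝ A ξ η ≤ p * (A ξ * (A η / A ξ) ^ (1/p)) := by
  have hx := aux_pos A p hp hc hh ξ hξ
  rcases eq_or_ne η 0 with rfl | hη
  · have h0 : A 0 = 0 := by
      have := hh 0 le_rfl 0
      rwa [zero_rpow (by linarith), zero_mul, smul_zero] at this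
    have : (1 / p) ≠ 0 := by positivity
    rw [h0, zero_div, zero_rpow this]; simp
  have hy := aux_pos A p hp hc hh η hη
  have hz : 0 < (A η / A ξ) ^ (1/p) := by positivity
  have hzp : ((A η / A ξ) ^ (1/p)) ^ p = A η / A ξ := by
    rw [← rpow_mul (by positivity), one_div_mul_cancel (by linarith), rpow_one]
  set z := (A η / A ξ) ^ (1/p) with hzdef
  have h1 := aux_conv A hc.convexOn hd ξ (z⁻¹ • η)
  rw [hh _ (by positivity), map_sub, map_smul, aux_euler A p hh hd, inv_rpow hz.le, hzp,
    smul_eq_mul] at h1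
  have h2 : (A η / A ξ)⁻¹ * A η = A ξ := by field_simp
  rw [h2] at h1
  have h3 : z⁻¹ * fderiv ℝ A ξ η ≤ p * A ξ := by linarith
  calc fderiv ℝ A ξ η = z * (z⁻¹ * fderiv ℝ A ξ η) := by field_simp
    _ ≤ z * (p * A ξ) := by gcongr
    _ = _ := by ring

lemma aux_bern (r s z : ℝ) (hr : 1 ≤ r) (hs : 0 < s) (hz : 0 ≤ z) :
    r * s ^ (r - 1) * z - (r - 1) * s ^ r ≤ z ^ r := by
  have h := one_add_mul_self_le_rpow_one_add (s := z / s - 1)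
    (by have : 0 ≤ z / s := by positivity
        linarith) hr
  rw [add_sub_cancel, div_rpow hz hs.le, le_div_iff₀ (by positivity)] at h
  rw [rpow_sub_one hs.ne']
  refine le_trans (le_of_eq ?_) h
  field_simp
  ring

lemma aux_grad {E : Type*} [NormedAddCommGroup E] [InnerProductSpace ℝ E] (Ω : Set E)
    (hΩ : IsOpen Ω) (r : ℝ) (hr : 1 ≤ r) (v v₀ : E → ℝ)
    (hv : ∀ x ∈ Ω, 0 < v x) (hv₀ : ∀ x ∈ Ω, 0 < v₀ x)
    (hvd : ∀ x ∈ Ω, DifferentiableAt ℝ v x) (hv₀d : ∀ x ∈ Ω, DifferentiableAt ℝ v₀ x)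
    (x : E) (hx : x ∈ Ω) : ∃ s : ℝ, 0 < s ∧
    fderiv ℝ (fun x => v x / (v₀ x) ^ ((r - 1)/r)) x =
      (r * s ^ (r-1)) • fderiv ℝ (fun x => (v x) ^ (1/r)) x
        - ((r-1) * s ^ r) • fderiv ℝ (fun x => (v₀ x) ^ (1/r)) x := by
  have hu : HasFDerivAt (fun x => (v x) ^ (1/r)) (fderiv ℝ (fun x => (v x) ^ (1/r)) x) x :=
    ((hvd x hx).rpow_const (Or.inl (hv x hx).ne')).hasFDerivAt
  have hu₀ : HasFDerivAt (fun x => (v₀ x) ^ (1/r)) (fderiv ℝ (fun x => (v₀ x) ^ (1/r)) x) x :=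
    ((hv₀d x hx).rpow_const (Or.inl (hv₀ x hx).ne')).hasFDerivAt
  have hb : 0 < (v x) ^ (1/r) := rpow_pos_of_pos (hv x hx) _
  have ha : 0 < (v₀ x) ^ (1/r) := rpow_pos_of_pos (hv₀ x hx) _
  refine ⟨(v x) ^ (1/r) / (v₀ x) ^ (1/r), by positivity, ?_⟩
  have h1 := (hu.rpow_const (p := r) (Or.inl hb.ne')).mul
    (hu₀.rpow_const (p := 1 - r) (Or.inl ha.ne'))
  have he : (fun x => v x / (v₀ x) ^ ((r - 1)/r)) =ᶠ[nhds x]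
      (fun x => ((v x) ^ (1/r)) ^ r * ((v₀ x) ^ (1/r)) ^ (1 - r)) := by
    filter_upwards [hΩ.mem_nhds hx] with y hy
    rw [← rpow_mul (hv y hy).le, ← rpow_mul (hv₀ y hy).le, one_div_mul_cancel (by linarith),
      rpow_one, div_eq_mul_inv, ← rpow_neg (hv₀ y hy).le]
    congr 2
    ring
  rw [(h1.congr_of_eventuallyEq he).fderiv]
  generalize (v x) ^ (1/r) = b at *
  generalize (v₀ x) ^ (1/r) = a at *
  ext w
  simp only [ContinuousLinearMap.add_apply, ContinuousLinearMap.sub_apply,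
    ContinuousLinearMap.smul_apply, smul_eq_mul]
  rw [div_rpow hb.le ha.le, div_rpow hb.le ha.le, show 1 - r - 1 = -r by ring,
    show 1 - r = -(r-1) by ring, rpow_neg ha.le, rpow_neg ha.le]
  ring

theorem picone_identity_variable_exponent
    (N : ℕ) (hN : 1 ≤ N)
    (Ω : Set (EuclideanSpace ℝ (Fin N))) (hΩ : IsOpen Ω)
    (p : EuclideanSpace ℝ (Fin N) → ℝ) (hp : ∀ x ∈ Ω, 1 < p x)
    (A : EuclideanSpace ℝ (Fin N) → EuclideanSpace ℝ (Fin N) → ℝ)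
    (hconv : ∀ x ∈ Ω, StrictConvexOn ℝ Set.univ (A x))
    (hhom : ∀ x ∈ Ω, ∀ t : ℝ, 0 ≤ t → ∀ ξ : EuclideanSpace ℝ (Fin N),
      A x (t • ξ) = t ^ (p x) * A x ξ)
    (hdiff : ∀ x ∈ Ω, Differentiable ℝ (A x))
    (r : ℝ) (hr : 1 ≤ r)
    (v v₀ : EuclideanSpace ℝ (Fin N) → ℝ)
    (hv : ∀ x ∈ Ω, 0 < v x) (hv₀ : ∀ x ∈ Ω, 0 < v₀ x)
    (hvd : ∀ x ∈ Ω, DifferentiableAt ℝ v x) (hv₀d : ∀ x ∈ Ω, DifferentiableAt ℝ v₀ x) :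
    ∀ x₀ ∈ Ω, gradient (fun x => (v₀ x) ^ (1/r)) x₀ ≠ 0 →
      (1 / p x₀) *
        ⟪gradient (A x₀) (gradient (fun x => (v₀ x) ^ (1/r)) x₀),
          gradient (fun x => v x / (v₀ x) ^ ((r - 1)/r)) x₀⟫
      ≤ (A x₀ (gradient (fun x => (v x) ^ (1/r)) x₀)) ^ (r / p x₀) *
        (A x₀ (gradient (fun x => (v₀ x) ^ (1/r)) x₀)) ^ ((p x₀ - r) / p x₀) := by

  intro x hx hξ
  obtain ⟨s, hs, hf⟩ := aux_grad Ω hΩ r hr v v₀ hv hv₀ hvd hv₀d x hx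
  have hg : gradient (fun x => v x / (v₀ x) ^ ((r - 1)/r)) x =
      (r * s ^ (r-1)) • gradient (fun x => (v x) ^ (1/r)) x
        - ((r-1) * s ^ r) • gradient (fun x => (v₀ x) ^ (1/r)) x := by
    unfold gradient
    rw [hf, map_sub, map_smulₛₗ, map_smulₛₗ]
    simp
  rw [hg]
  generalize gradient (fun x => (v₀ x) ^ (1/r)) x = ξ at *
  generalize gradient (fun x => (v x) ^ (1/r)) x = η at *
  have hp1 := hp x hx
  have hin : ∀ w, ⟪gradient (A x) ξ, w⟫ = fderiv ℝ (A x) ξ w := by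
    intro w
    simp [gradient]
  rw [hin, map_sub, map_smul, map_smul, aux_euler (A x) (p x) (hhom x hx) (hdiff x hx)]
  have hk := aux_key (A x) (p x) hp1 (hconv x hx) (hhom x hx) (hdiff x hx) ξ η hξ
  have hX := aux_pos (A x) (p x) hp1 (hconv x hx) (hhom x hx) ξ hξ
  have hY : 0 ≤ A x η := by
    rcases eq_or_ne η 0 with rfl | hη
    · have := hhom x hx 0 le_rfl 0
      rw [zero_rpow (by linarith), zero_mul, smul_zero] at this
      exact this.ge
    · exact (aux_pos (A x) (p x) hp1 (hconv x hx) (hhom x hx) η hη).le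
  generalize fderiv ℝ (A x) ξ η = d at *
  generalize A x ξ = X at *
  generalize A x η = Y at *
  generalize p x = q at *
  have hq : 0 < q := by linarith
  have hz : 0 ≤ (Y / X) ^ (1/q) := by positivity
  have hB := aux_bern r s _ hr hs hz
  have hR : Y ^ (r / q) * X ^ ((q - r) / q) = X * ((Y / X) ^ (1/q)) ^ r := by
    rw [← rpow_mul (by positivity), one_div_mul_eq_div, div_rpow hY hX.le, sub_div,
      div_self hq.ne', rpow_sub hX, rpow_one]
    ring
  rw [hR]
  simp only [smul_eq_mul]
  generalize (Y / X) ^ (1/q) = z at *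
  have hc : 0 ≤ r * s ^ (r-1) / q := by positivity
  calc _ = r * s ^ (r-1) / q * d - (r-1) * s ^ r * X := by field_simp
    _ ≤ r * s ^ (r-1) / q * (q * (X * z)) - (r-1) * s ^ r * X := by gcongr
    _ = X * (r * s ^ (r-1) * z - (r-1) * s ^ r) := by field_simp
    _ ≤ _ := by gcongr
end

section
/- Let N ≥ 1, let p > 1 and r ≥ 1 be real numbers, and let A : ℝ^N → ℝ be strictly convex, positively p-homogeneous, and differentiable on ℝ^N. Let t > 0 and let η, η₀ ∈ ℝ^N with η₀ ≠ 0. Then (1/p) · ⟨∇A(η₀), r·t^((r−1)/r) • η − (r−1)·t • η₀⟩ ≤ A(η)^(r/p) · A(η₀)^((p−r)/p). Moreover, if r > 1 and η ≠ t^(1/r) • η₀, the inequality is strict. -/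
open Real
open scoped RealInnerProductSpace

theorem picone_tangent {N : ℕ} (A : EuclideanSpace ℝ (Fin N) → ℝ)
    (hconv : ConvexOn ℝ Set.univ A) (hdiff : Differentiable ℝ A)
    (x y : EuclideanSpace ℝ (Fin N)) :
    A x + ⟪gradient A x, y - x⟫ ≤ A y := by
  have h1 : ConvexOn ℝ Set.univ (A ∘ (AffineMap.lineMap x y : ℝ →ᵃ[ℝ] _)) := by
    simpa using hconv.comp_affineMap (AffineMap.lineMap x y : ℝ →ᵃ[ℝ] _)
  have h2 : HasDerivAt (A ∘ (AffineMap.lineMap x y : ℝ →ᵃ[ℝ] _)) ⟪gradient A x, y - x⟫ 0 := by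
    have hg := (hdiff x).hasGradientAt.hasFDerivAt
    have hl : HasDerivAt (fun u : ℝ => (AffineMap.lineMap x y : ℝ →ᵃ[ℝ] _) u) (y - x) 0 :=
      AffineMap.hasDerivAt_lineMap
    have := HasFDerivAt.comp_hasDerivAt (l := A) (0:ℝ) (by simpa using hg) hl
    simpa using this
  have h3 := h1.le_slope_of_hasDerivAt (x := 0) (y := 1) (by simp) (by simp) one_pos h2
  simp only [slope_def_field, Function.comp_apply, AffineMap.lineMap_apply_one,
    AffineMap.lineMap_apply_zero, sub_zero, div_one] at h3
  linarith

theorem picone_tangent_strict {N : ℕ} (A : EuclideanSpace ℝ (Fin N) → ℝ)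
    (hconv : StrictConvexOn ℝ Set.univ A) (hdiff : Differentiable ℝ A)
    (x y : EuclideanSpace ℝ (Fin N)) (hxy : x ≠ y) :
    A x + ⟪gradient A x, y - x⟫ < A y := by
  have h1 := picone_tangent A hconv.convexOn hdiff x ((1/2 : ℝ) • x + (1/2 : ℝ) • y)
  have h2 := hconv.2 (Set.mem_univ x) (Set.mem_univ y) hxy
    (show (0:ℝ) < 1/2 by norm_num) (show (0:ℝ) < 1/2 by norm_num) (by norm_num)
  simp only [inner_sub_right, inner_add_right, inner_smul_right, smul_eq_mul] at *
  linarith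

theorem picone_euler {N : ℕ} (A : EuclideanSpace ℝ (Fin N) → ℝ) (p : ℝ)
    (hhom : ∀ s : ℝ, 0 ≤ s → ∀ ξ : EuclideanSpace ℝ (Fin N), A (s • ξ) = s ^ p * A ξ)
    (hdiff : Differentiable ℝ A) (x : EuclideanSpace ℝ (Fin N)) :
    ⟪gradient A x, x⟫ = p * A x := by
  have hg := (hdiff x).hasGradientAt.hasFDerivAt
  have hl : HasDerivAt (fun u : ℝ => u • x) x 1 := by
    simpa using (hasDerivAt_id (1:ℝ)).smul_const x
  have h1 := HasFDerivAt.comp_hasDerivAt (l := A) (1:ℝ) (by simpa using hg) hl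
  have h2 : HasDerivAt (fun s : ℝ => s ^ p * A x) (p * A x) 1 := by
    simpa using (Real.hasDerivAt_rpow_const (x := 1) (p := p) (by simp)).mul_const (A x)
  have h3 : (fun s : ℝ => s ^ p * A x) =ᶠ[nhds 1] (A ∘ fun u : ℝ => u • x) := by
    filter_upwards [lt_mem_nhds (zero_lt_one (α := ℝ))] with s hs
    exact (hhom s hs.le x).symm
  have h4 := (h1.congr_of_eventuallyEq h3).unique h2
  simpa using h4

theorem picone_num (r s τ : ℝ) (hr : 1 ≤ r) (hs : 0 ≤ s) (hτ : 0 < τ) :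
    r * τ ^ (r - 1) * s - (r - 1) * τ ^ r ≤ s ^ r ∧
    (1 < r → s ≠ τ → r * τ ^ (r - 1) * s - (r - 1) * τ ^ r < s ^ r) := by
  have e1 : τ ^ r = τ ^ (r - 1) * τ := by
    rw [Real.rpow_sub_one hτ.ne']; field_simp
  have hd : 0 ≤ s / τ := by positivity
  have e2 : s ^ r = τ ^ r * (1 + (s / τ - 1)) ^ r := by
    rw [← Real.mul_rpow hτ.le (by linarith)]; congr 1; field_simp; ring
  have e3 : r * τ ^ (r - 1) * s - (r - 1) * τ ^ r = τ ^ r * (1 + r * (s / τ - 1)) := by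
    rw [e1]; field_simp; ring
  have hp : 0 < τ ^ r := Real.rpow_pos_of_pos hτ r
  rw [e2, e3]
  refine ⟨mul_le_mul_of_nonneg_left
    (one_add_mul_self_le_rpow_one_add (by linarith) hr) hp.le, fun h1 h2 => ?_⟩
  refine mul_lt_mul_of_pos_left
    (one_add_mul_self_lt_rpow_one_add (by linarith) ?_ h1) hp
  intro h
  apply h2
  have : s / τ = 1 := by linarith
  field_simp at this
  exact this

theorem picone_identity_pointwise_vector_form
    (N : ℕ) (hN : 1 ≤ N) (p r : ℝ) (hp : 1 < p) (hr : 1 ≤ r)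
    (A : EuclideanSpace ℝ (Fin N) → ℝ)
    (hconv : StrictConvexOn ℝ Set.univ A)
    (hhom : ∀ s : ℝ, 0 ≤ s → ∀ ξ : EuclideanSpace ℝ (Fin N), A (s • ξ) = s ^ p * A ξ)
    (hdiff : Differentiable ℝ A)
    (t : ℝ) (ht : 0 < t)
    (η η₀ : EuclideanSpace ℝ (Fin N)) (hη₀ : η₀ ≠ 0) :
    (1/p) * ⟪gradient A η₀, (r * t ^ ((r - 1)/r)) • η - ((r - 1) * t) • η₀⟫
      ≤ (A η) ^ (r/p) * (A η₀) ^ ((p - r)/p) ∧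
    (1 < r → η ≠ t ^ (1/r) • η₀ →
      (1/p) * ⟪gradient A η₀, (r * t ^ ((r - 1)/r)) • η - ((r - 1) * t) • η₀⟫
        < (A η) ^ (r/p) * (A η₀) ^ ((p - r)/p)) := by
  have hA0 : A 0 = 0 := by
    have := hhom 0 le_rfl 0
    rwa [Real.zero_rpow (by linarith), zero_mul, smul_zero] at this
  have hpos : ∀ x, x ≠ 0 → 0 < A x := by
    intro x hx
    have h1 := picone_tangent_strict A hconv hdiff x 0 hx
    rw [zero_sub, inner_neg_right, picone_euler A p hhom hdiff, hA0] at h1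
    nlinarith
  have ha := hpos η₀ hη₀
  have hE := picone_euler A p hhom hdiff η₀
  have hp0 : 0 < p := by linarith
  have hr0 : 0 < r := by linarith
  obtain ⟨s, hs, hb, hG, hGs⟩ : ∃ s : ℝ, 0 ≤ s ∧ A η = s ^ p * A η₀ ∧
      ⟪gradient A η₀, η⟫ ≤ p * s * A η₀ ∧
      (η ≠ s • η₀ → ⟪gradient A η₀, η⟫ < p * s * A η₀) := by
    by_cases hη : η = 0
    · refine ⟨0, le_rfl, ?_, ?_, ?_⟩
      · rw [hη, hA0, Real.zero_rpow hp0.ne', zero_mul]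
      · simp [hη]
      · simp [hη]
    · have hbp := hpos η hη
      have hs : 0 < (A η / A η₀) ^ (1/p) := Real.rpow_pos_of_pos (div_pos hbp ha) _
      have hsp : ((A η / A η₀) ^ (1/p)) ^ p = A η / A η₀ := by
        rw [← Real.rpow_mul (div_pos hbp ha).le, one_div, inv_mul_cancel₀ hp0.ne', Real.rpow_one]
      generalize (A η / A η₀) ^ (1/p) = s at hs hsp
      have hb : A η = s ^ p * A η₀ := by rw [hsp]; field_simp
      have hy : A (s⁻¹ • η) = A η₀ := by
        rw [hhom _ (inv_pos.2 hs).le, Real.inv_rpow hs.le, hb]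
        have := Real.rpow_pos_of_pos hs p
        field_simp
      have hstrict : η ≠ s • η₀ → ⟪gradient A η₀, η⟫ < p * s * A η₀ := by
        intro hne
        have h1 := picone_tangent_strict A hconv hdiff η₀ (s⁻¹ • η) (by
          intro h; apply hne; rw [h, smul_smul, mul_inv_cancel₀ hs.ne', one_smul])
        rw [hy, inner_sub_right, inner_smul_right, hE] at h1
        have h2 : s⁻¹ * ⟪gradient A η₀, η⟫ < p * A η₀ := by linarith
        rw [inv_mul_lt_iff₀ hs] at h2
        linarith
      refine ⟨s, hs.le, hb, ?_, hstrict⟩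
      by_cases hne : η = s • η₀
      · apply le_of_eq
        rw [hne, inner_smul_right, hE]; ring
      · exact (hstrict hne).le
  have hR : (A η) ^ (r/p) * (A η₀) ^ ((p - r)/p) = s ^ r * A η₀ := by
    rw [hb, Real.mul_rpow (Real.rpow_nonneg hs p) ha.le, ← Real.rpow_mul hs, mul_assoc,
      ← Real.rpow_add ha]
    have e1 : p * (r / p) = r := by field_simp
    have e2 : r / p + (p - r) / p = 1 := by field_simp; ring
    rw [e1, e2, Real.rpow_one]
  have hτ : 0 < t ^ (1/r) := Real.rpow_pos_of_pos ht _
  have ht1 : t ^ ((r - 1)/r) = (t ^ (1/r)) ^ (r - 1) := by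
    rw [← Real.rpow_mul ht.le]; congr 1; ring
  have ht2 : t = (t ^ (1/r)) ^ r := by
    rw [← Real.rpow_mul ht.le, one_div, inv_mul_cancel₀ hr0.ne', Real.rpow_one]
  have hL : (1/p) * ⟪gradient A η₀, (r * t ^ ((r - 1)/r)) • η - ((r - 1) * t) • η₀⟫
      = (r * (t ^ (1/r)) ^ (r - 1)) * (⟪gradient A η₀, η⟫ / p)
        - (r - 1) * (t ^ (1/r)) ^ r * A η₀ := by
    rw [inner_sub_right, inner_smul_right, inner_smul_right, hE, ht1, ← ht2]
    field_simp
  rw [hL, hR]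
  generalize t ^ (1/r) = τ at *
  obtain ⟨n1, n2⟩ := picone_num r s τ hr hs hτ
  have hc : 0 < r * τ ^ (r - 1) := mul_pos hr0 (Real.rpow_pos_of_pos hτ _)
  have hG' : ⟪gradient A η₀, η⟫ / p ≤ s * A η₀ := by
    rw [div_le_iff₀ hp0]; linarith
  have m1 := mul_le_mul_of_nonneg_left hG' hc.le
  have m2 := mul_le_mul_of_nonneg_right n1 ha.le
  refine ⟨by linarith, fun h1 hne => ?_⟩
  by_cases hsτ : s = τ
  · subst hsτ
    have hG'' : ⟪gradient A η₀, η⟫ / p < s * A η₀ := by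
      rw [div_lt_iff₀ hp0]; linarith [hGs hne]
    have m3 := mul_lt_mul_of_pos_left hG'' hc
    linarith
  · have m3 := mul_lt_mul_of_pos_right (n2 h1 hsτ) ha
    linarith
end

section
/- Let N ≥ 1, let p > 1 and r ≥ 1 be real numbers with r ≤ p, let Ω ⊆ ℝ^N be open, and let u, v : Ω → ℝ be positive differentiable functions. Then for every x ∈ Ω one has ‖∇u(x)‖^p + ‖∇v(x)‖^p ≥ ‖∇v(x)‖^(p−2) · ⟨∇v(x), ∇(u^r / v^(r−1))(x)⟩ + ‖∇u(x)‖^(p−2) · ⟨∇u(x), ∇(v^r / u^(r−1))(x)⟩. (Picone identity for the p(x)-Laplacian, pointwise form.) -/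
open Real
open scoped RealInnerProductSpace

theorem picone_young (r t a b : ℝ) (hr : 1 ≤ r) (ht : 0 < t) (ha : 0 ≤ a) (hb : 0 < b) :
    r * t ^ (r - 1) * (a * b) - (r - 1) * t ^ r * b ^ 2 ≤ a ^ r * b ^ (2 - r) := by
  have h := one_add_mul_self_le_rpow_one_add (s := a / (t * b) - 1) (p := r)
    (by have : 0 ≤ a / (t * b) := by positivity
        linarith) hr
  rw [add_sub_cancel, Real.div_rpow ha (by positivity), Real.mul_rpow ht.le hb.le] at h
  have e1 : t ^ (r - 1) = t ^ r / t := by rw [Real.rpow_sub ht, Real.rpow_one]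
  have e2 : b ^ (2 - r) = b ^ 2 / b ^ r := by rw [Real.rpow_sub hb, Real.rpow_two]
  have h1 : 0 < t ^ r := by positivity
  have h2 : 0 < b ^ r := by positivity
  have h3 := mul_le_mul_of_nonneg_left h (by positivity : 0 ≤ t ^ r * b ^ 2)
  rw [e1, e2]
  have q1 : t ^ r * b ^ 2 * (1 + r * (a / (t * b) - 1))
      = r * (t ^ r / t) * (a * b) - (r - 1) * t ^ r * b ^ 2 := by
    field_simp
    ring
  have q2 : t ^ r * b ^ 2 * (a ^ r / (t ^ r * b ^ r)) = a ^ r * (b ^ 2 / b ^ r) := by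
    field_simp
  rw [q1, q2] at h3
  exact h3

theorem picone_fderiv {E : Type*} [NormedAddCommGroup E] [InnerProductSpace ℝ E]
    (r : ℝ) (f g : E → ℝ) (x : E) (hf : 0 < f x) (hg : 0 < g x)
    (hfd : DifferentiableAt ℝ f x) (hgd : DifferentiableAt ℝ g x) (w : E) :
    fderiv ℝ (fun y => (f y) ^ r / (g y) ^ (r - 1)) x w
      = r * (f x / g x) ^ (r - 1) * fderiv ℝ f x w
        - (r - 1) * (f x / g x) ^ r * fderiv ℝ g x w := by
  have h1 := hfd.hasFDerivAt.rpow_const (p := r) (Or.inl hf.ne')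
  have h2 := hgd.hasFDerivAt.rpow_const (p := r - 1) (Or.inl hg.ne')
  have hne : g x ^ (r - 1) ≠ 0 := by positivity
  have h3 := (h1.mul ((hasDerivAt_inv hne).comp_hasFDerivAt x h2)).fderiv
  refine (congrArg (fun L => L w) h3).trans ?_
  simp only [ContinuousLinearMap.add_apply, Function.comp_apply, ContinuousLinearMap.smul_apply, smul_eq_mul]
  rw [Real.div_rpow hf.le hg.le, Real.div_rpow hf.le hg.le]
  have e0 : (0:ℝ) < g x ^ r := by positivity
  rw [Real.rpow_sub hg (r - 1), Real.rpow_sub hg, Real.rpow_sub hf, Real.rpow_one, Real.rpow_one]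
  field_simp
  ring

theorem picone_one {E : Type*} [NormedAddCommGroup E] [InnerProductSpace ℝ E] [CompleteSpace E]
    (p r : ℝ) (hr : 1 ≤ r) (f g : E → ℝ) (x : E) (hf : 0 < f x) (hg : 0 < g x)
    (hfd : DifferentiableAt ℝ f x) (hgd : DifferentiableAt ℝ g x) :
    ‖gradient g x‖ ^ (p - 2) * ⟪gradient g x, gradient (fun y => (f y) ^ r / (g y) ^ (r - 1)) x⟫
      ≤ ‖gradient f x‖ ^ r * ‖gradient g x‖ ^ (p - r) := by
  have key : ∀ (h : E → ℝ) (w : E), fderiv ℝ h x w = ⟪w, gradient h x⟫ := by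
    intro h w
    rw [real_inner_comm, gradient, InnerProductSpace.toDual_symm_apply]
  rw [← key, picone_fderiv r f g x hf hg hfd hgd, key f, key g, real_inner_self_eq_norm_sq]
  by_cases hz : gradient g x = 0
  · simp only [hz, inner_zero_left, norm_zero]
    simp
    positivity
  have hb : 0 < ‖gradient g x‖ := norm_pos_iff.mpr hz
  have ht : 0 < f x / g x := by positivity
  have hy := picone_young r (f x / g x) ‖gradient f x‖ ‖gradient g x‖ hr ht (norm_nonneg _) hb
  have hc : ⟪gradient g x, gradient f x⟫ ≤ ‖gradient f x‖ * ‖gradient g x‖ := by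
    rw [mul_comm]
    exact real_inner_le_norm _ _
  have hc2 := mul_le_mul_of_nonneg_left hc
    (by positivity : 0 ≤ r * (f x / g x) ^ (r - 1))
  have e : ‖gradient g x‖ ^ (p - r) = ‖gradient g x‖ ^ (p - 2) * ‖gradient g x‖ ^ (2 - r) := by
    rw [← Real.rpow_add hb]
    congr 1
    ring
  rw [e, mul_left_comm]
  apply mul_le_mul_of_nonneg_left _ (by positivity)
  linarith

theorem picone_rearr (p r a b : ℝ) (hr : 1 ≤ r) (hrp : r ≤ p) (ha : 0 ≤ a) (hb : 0 ≤ b) :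
    a ^ r * b ^ (p - r) + b ^ r * a ^ (p - r) ≤ a ^ p + b ^ p := by
  have e : ∀ c : ℝ, 0 ≤ c → c ^ p = c ^ r * c ^ (p - r) := by
    intro c hc
    rw [← Real.rpow_add_of_nonneg hc (by linarith) (by linarith)]
    congr 1
    ring
  rw [e a ha, e b hb]
  rcases le_total a b with h | h
  · have h1 := Real.rpow_le_rpow ha h (by linarith : 0 ≤ r)
    have h2 := Real.rpow_le_rpow ha h (by linarith : 0 ≤ p - r)
    nlinarith [mul_nonneg (sub_nonneg.2 h1) (sub_nonneg.2 h2)]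
  · have h1 := Real.rpow_le_rpow hb h (by linarith : 0 ≤ r)
    have h2 := Real.rpow_le_rpow hb h (by linarith : 0 ≤ p - r)
    nlinarith [mul_nonneg (sub_nonneg.2 h1) (sub_nonneg.2 h2)]

theorem picone_identity_pLaplacian_pointwise
    (N : ℕ) (hN : 1 ≤ N) (p r : ℝ) (hp : 1 < p) (hr : 1 ≤ r) (hrp : r ≤ p)
    (Ω : Set (EuclideanSpace ℝ (Fin N))) (hΩ : IsOpen Ω)
    (u v : EuclideanSpace ℝ (Fin N) → ℝ)
    (hu : ∀ x ∈ Ω, 0 < u x) (hv : ∀ x ∈ Ω, 0 < v x)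
    (hud : ∀ x ∈ Ω, DifferentiableAt ℝ u x) (hvd : ∀ x ∈ Ω, DifferentiableAt ℝ v x) :
    ∀ x ∈ Ω,
      ‖gradient v x‖ ^ (p - 2) *
          ⟪gradient v x, gradient (fun y => (u y) ^ r / (v y) ^ (r - 1)) x⟫
        + ‖gradient u x‖ ^ (p - 2) *
          ⟪gradient u x, gradient (fun y => (v y) ^ r / (u y) ^ (r - 1)) x⟫
      ≤ ‖gradient u x‖ ^ p + ‖gradient v x‖ ^ p := by
  intro x hx
  have h1 := picone_one p r hr u v x (hu x hx) (hv x hx) (hud x hx) (hvd x hx)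
  have h2 := picone_one p r hr v u x (hv x hx) (hu x hx) (hvd x hx) (hud x hx)
  have h3 := picone_rearr p r ‖gradient u x‖ ‖gradient v x‖ hr hrp (norm_nonneg _) (norm_nonneg _)
  linarith
end

section
/- Let N ≥ 1 and for each i ∈ {1,…,N} let B_i : ℝ → ℝ be strictly convex, positively p_i-homogeneous with p_i > 1, and differentiable, and set b_i(s) = (1/p_i) · B_i'(s). Let r ≥ 1 be real, t > 0, and let s, s₀ : Fin N → ℝ with s₀(i) ≠ 0 for every i. Then ∑_{i=1}^N b_i(s₀(i)) · (r·t^((r−1)/r)·s(i) − (r−1)·t·s₀(i)) ≤ ∑_{i=1}^N B_i(s(i))^(r/p_i) · B_i(s₀(i))^((p_i−r)/p_i). (Picone identity for anisotropic operators, pointwise form.) -/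
open Real

theorem picone_aux (p : ℝ) (hp : 1 < p) (B : ℝ → ℝ)
    (hconv : StrictConvexOn ℝ Set.univ B)
    (hhom : ∀ t : ℝ, 0 ≤ t → ∀ s : ℝ, B (t * s) = t ^ p * B s)
    (hdiff : Differentiable ℝ B)
    (r : ℝ) (hr : 1 ≤ r) (t : ℝ) (ht : 0 < t) (s s₀ : ℝ) (hs₀ : s₀ ≠ 0) :
    (1 / p) * deriv B s₀ * (r * t ^ ((r - 1)/r) * s - (r - 1) * t * s₀)
      ≤ (B s) ^ (r / p) * (B s₀) ^ ((p - r) / p) := by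
  have hp0 : 0 < p := by linarith
  have hr0 : 0 < r := by linarith
  have hB0 : B 0 = 0 := by
    have := hhom 0 le_rfl 0
    rwa [Real.zero_rpow hp0.ne', zero_mul, zero_mul] at this
  have hpos : ∀ x : ℝ, x ≠ 0 → 0 < B x := by
    intro x hx
    have h1 := hconv.2 (Set.mem_univ (0:ℝ)) (Set.mem_univ (2 * x))
      (by intro h; apply hx; linarith)
      (show (0:ℝ) < 1/2 by norm_num) (show (0:ℝ) < 1/2 by norm_num) (by norm_num)
    have h2 := hhom 2 (by norm_num) x
    have h3 : (2:ℝ) < 2 ^ p := by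
      have := Real.rpow_lt_rpow_of_exponent_lt (x := 2) (by norm_num) hp
      simpa using this
    simp only [smul_eq_mul] at h1
    rw [h2, hB0, show (1/2 * 0 + 1/2 * (2 * x) : ℝ) = x by ring] at h1
    by_contra hn
    push Not at hn
    nlinarith
  have hnn : ∀ x : ℝ, 0 ≤ B x := by
    intro x
    by_cases hx : x = 0
    · rw [hx, hB0]
    · exact (hpos x hx).le
  have hb := hpos s₀ hs₀
  have heuler : s₀ * deriv B s₀ = p * B s₀ := by
    have e1 : HasDerivAt (fun u : ℝ => B (u * s₀)) (deriv B s₀ * s₀) 1 := by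
      have hB : HasDerivAt B (deriv B s₀) ((1:ℝ) * s₀) := by
        rw [one_mul]; exact (hdiff s₀).hasDerivAt
      have hm : HasDerivAt (fun u : ℝ => u * s₀) s₀ 1 := by
        simpa using (hasDerivAt_id (1:ℝ)).mul_const s₀
      exact hB.comp (1:ℝ) hm
    have e2 : HasDerivAt (fun u : ℝ => u ^ p * B s₀) (p * B s₀) 1 := by
      have := (Real.hasDerivAt_rpow_const (x := 1) (p := p) (Or.inl one_ne_zero)).mul_const (B s₀)
      simpa using this
    have e3 : (fun u : ℝ => B (u * s₀)) =ᶠ[nhds 1] (fun u : ℝ => u ^ p * B s₀) := by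
      filter_upwards [lt_mem_nhds (zero_lt_one (α := ℝ))] with u hu
      exact hhom u hu.le s₀
    have := (e1.congr_of_eventuallyEq e3.symm).unique e2
    linarith
  obtain ⟨σ, rfl⟩ : ∃ σ, s = σ * s₀ := ⟨s / s₀, by field_simp⟩
  have hL : (1 / p) * deriv B s₀ * (r * t ^ ((r - 1)/r) * (σ * s₀) - (r - 1) * t * s₀)
      = B s₀ * (r * t ^ ((r - 1)/r) * σ - (r - 1) * t) := by
    have : B s₀ = (1 / p) * (s₀ * deriv B s₀) := by rw [heuler]; field_simp
    rw [this]; ring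
  rw [hL]
  have hT : 0 < t ^ ((r - 1)/r) := Real.rpow_pos_of_pos ht _
  rcases le_or_gt 0 σ with hσ | hσ
  · have hR : (B (σ * s₀)) ^ (r / p) * (B s₀) ^ ((p - r) / p) = B s₀ * σ ^ r := by
      rw [hhom σ hσ, Real.mul_rpow (Real.rpow_nonneg hσ _) hb.le, ← Real.rpow_mul hσ,
        mul_assoc, ← Real.rpow_add hb, show p * (r / p) = r by field_simp,
        show r / p + (p - r) / p = 1 by field_simp; ring, Real.rpow_one, mul_comm]
    rw [hR]
    apply mul_le_mul_of_nonneg_left _ hb.le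
    have h := Real.geom_mean_le_arith_mean2_weighted (w₁ := 1 / r) (w₂ := (r - 1) / r)
      (p₁ := σ ^ r) (p₂ := t) (by positivity) (div_nonneg (by linarith) hr0.le)
      (Real.rpow_nonneg hσ _) ht.le (by field_simp; ring)
    rw [← Real.rpow_mul hσ, show r * (1 / r) = 1 by field_simp, Real.rpow_one] at h
    have h' := mul_le_mul_of_nonneg_left h hr0.le
    have h2 : r * (1 / r * σ ^ r + (r - 1) / r * t) = σ ^ r + (r - 1) * t := by field_simp
    rw [h2] at h'
    linarith
  · have h1 : r * t ^ ((r - 1)/r) * σ - (r - 1) * t ≤ 0 := by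
      have : r * t ^ ((r - 1)/r) * σ ≤ 0 :=
        mul_nonpos_of_nonneg_of_nonpos (by positivity) hσ.le
      have : 0 ≤ (r - 1) * t := mul_nonneg (by linarith) ht.le
      linarith
    exact (mul_nonpos_of_nonneg_of_nonpos hb.le h1).trans
      (mul_nonneg (Real.rpow_nonneg (hnn _) _) (Real.rpow_nonneg hb.le _))

theorem picone_identity_anisotropic_pointwise
    (N : ℕ) (hN : 1 ≤ N) (p : Fin N → ℝ) (hp : ∀ i, 1 < p i)
    (B : Fin N → ℝ → ℝ)
    (hconv : ∀ i, StrictConvexOn ℝ Set.univ (B i))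
    (hhom : ∀ i, ∀ t : ℝ, 0 ≤ t → ∀ s : ℝ, B i (t * s) = t ^ (p i) * B i s)
    (hdiff : ∀ i, Differentiable ℝ (B i))
    (r : ℝ) (hr : 1 ≤ r) (t : ℝ) (ht : 0 < t)
    (s s₀ : Fin N → ℝ) (hs₀ : ∀ i, s₀ i ≠ 0) :
    ∑ i : Fin N, (1 / p i) * deriv (B i) (s₀ i) *
        (r * t ^ ((r - 1)/r) * s i - (r - 1) * t * s₀ i)
      ≤ ∑ i : Fin N, (B i (s i)) ^ (r / p i) * (B i (s₀ i)) ^ ((p i - r) / p i) := by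
  exact Finset.sum_le_sum fun i _ =>
    picone_aux (p i) (hp i) (B i) (hconv i) (hhom i) (hdiff i) r hr t ht (s i) (s₀ i) (hs₀ i)
end

section
/- Let N ≥ 1, let p > 1 and r be real numbers with 1 ≤ r ≤ p, and let A : ℝ^N → ℝ be strictly convex, positively p-homogeneous, and differentiable on ℝ^N; set a(ξ) = (1/p) • ∇A(ξ). Then for every s > 0 and all ξ₁, ξ₂ ∈ ℝ^N one has ⟨a(ξ₂), ξ₂ − r·s^(r−1) • ξ₁ + (r−1)·s^r • ξ₂⟩ ≥ (r/p) · (A(ξ₂) − A(ξ₁)). -/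
open Real
open scoped RealInnerProductSpace

theorem diaz_saa_young_pointwise
    (N : ℕ) (hN : 1 ≤ N) (p r : ℝ) (hp : 1 < p) (hr : 1 ≤ r) (hrp : r ≤ p)
    (A : EuclideanSpace ℝ (Fin N) → ℝ)
    (hconv : StrictConvexOn ℝ Set.univ A)
    (hhom : ∀ t : ℝ, 0 ≤ t → ∀ ξ : EuclideanSpace ℝ (Fin N), A (t • ξ) = t ^ p * A ξ)
    (hdiff : Differentiable ℝ A)
    (s : ℝ) (hs : 0 < s) (ξ₁ ξ₂ : EuclideanSpace ℝ (Fin N)) :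
    ⟪(1/p) • gradient A ξ₂, ξ₂ - (r * s ^ (r - 1)) • ξ₁ + ((r - 1) * s ^ r) • ξ₂⟫
      ≥ (r/p) * (A ξ₂ - A ξ₁) := by
  have hline : ∀ x v : EuclideanSpace ℝ (Fin N), ∀ t : ℝ,
      HasDerivAt (fun t : ℝ => A (x + t • v)) (fderiv ℝ A (x + t • v) v) t := by
    intro x v t
    have h1 : HasDerivAt (fun t : ℝ => x + t • v) v t := by
      simpa using ((hasDerivAt_id t).smul_const v).const_add x
    exact (hdiff (x + t • v)).hasFDerivAt.comp_hasDerivAt t h1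
  have hE : fderiv ℝ A ξ₂ ξ₂ = p * A ξ₂ := by
    have h1 := hline 0 ξ₂ 1
    simp only [zero_add, one_smul] at h1
    have h2 : HasDerivAt (fun t : ℝ => t ^ p * A ξ₂) (p * A ξ₂) 1 := by
      simpa using (Real.hasDerivAt_rpow_const (x := 1) (p := p) (Or.inl one_ne_zero)).mul_const (A ξ₂)
    refine h1.unique (h2.congr_of_eventuallyEq ?_)
    filter_upwards [lt_mem_nhds (show (0:ℝ) < 1 by norm_num)] with t ht
    exact hhom t ht.le ξ₂
  have hC : ∀ y, A ξ₂ + fderiv ℝ A ξ₂ (y - ξ₂) ≤ A y := by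
    intro y
    have hg : ConvexOn ℝ Set.univ (fun t : ℝ => A (ξ₂ + t • (y - ξ₂))) := by
      refine ⟨convex_univ, fun a _ b _ m n hm hn hmn => ?_⟩
      have := hconv.convexOn.2 (Set.mem_univ (ξ₂ + a • (y - ξ₂)))
        (Set.mem_univ (ξ₂ + b • (y - ξ₂))) hm hn hmn
      convert this using 2
      obtain rfl : n = 1 - m := by linarith
      simp only [smul_eq_mul]
      module
    have h1 := hline ξ₂ (y - ξ₂) 0
    have h2 := hg.le_slope_of_hasDerivAt (Set.mem_univ 0) (Set.mem_univ 1) one_pos h1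
    simp [slope_def_field] at h2
    rw [map_sub]
    linarith
  have hA0 : A 0 = 0 := by
    have := hhom 0 le_rfl 0
    rwa [Real.zero_rpow (by linarith), zero_mul, smul_zero] at this
  have hX : 0 ≤ A ξ₂ := by
    have := hC 0
    rw [zero_sub, map_neg, hE, hA0] at this
    nlinarith
  have hG : ∀ v, ⟪gradient A ξ₂, v⟫ = fderiv ℝ A ξ₂ v := by
    intro v
    simp [gradient]
  rw [inner_smul_left, hG]
  simp only [map_add, map_sub, map_smul, smul_eq_mul, hE, conj_trivial]
  have hp0 : 0 < p := by linarith
  have hp1 : 0 < p - 1 := by linarith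
  set t : ℝ := s ^ (-((r-1)/(p-1))) with ht
  have htpos : 0 < t := Real.rpow_pos_of_pos hs _
  have hD := hC (t • ξ₁)
  rw [map_sub, map_smul, smul_eq_mul, hE, hhom t htpos.le] at hD
  set D := fderiv ℝ A ξ₂ ξ₁
  set X := A ξ₂
  set Y := A ξ₁
  set w : ℝ := s ^ (r-1) / t with hw
  have hwpos : 0 < w := div_pos (Real.rpow_pos_of_pos hs _) htpos
  have hwt : w * t = s ^ (r-1) := by rw [hw]; field_simp
  have hwtp : w * t ^ p = 1 := by
    rw [hw, ht, ← Real.rpow_mul hs.le, ← Real.rpow_sub hs, ← Real.rpow_add hs]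
    convert Real.rpow_zero s using 2
    field_simp
    ring
  set θ : ℝ := (r-1)*p/(r*(p-1)) with hθ
  have hr0 : 0 < r := by linarith
  have hwu : w = (s ^ r) ^ θ := by
    rw [hw, ht, ← Real.rpow_mul hs.le, ← Real.rpow_sub hs]
    congr 1
    rw [hθ]
    field_simp
    ring
  have hθ0 : 0 ≤ θ := div_nonneg (mul_nonneg (by linarith) hp0.le) (by positivity)
  have hθ1 : θ ≤ 1 := by
    rw [hθ, div_le_one (by positivity)]
    nlinarith
  have hB : w ≤ 1 + θ * (s ^ r - 1) := by
    have := rpow_one_add_le_one_add_mul_self (s := s ^ r - 1)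
      (by linarith [Real.rpow_pos_of_pos hs r]) hθ0 hθ1
    rw [hwu]
    simpa using this
  have h1 := mul_le_mul_of_nonneg_left hD hwpos.le
  have h2 : s ^ (r-1) * D ≤ Y + (p-1) * w * X := by
    rw [← hwt]
    have : w * (t ^ p * Y) = Y := by rw [← mul_assoc, hwtp, one_mul]
    nlinarith
  have h3 : r * (p-1) * w ≤ p - r + p * (r-1) * s ^ r := by
    have h4 := mul_le_mul_of_nonneg_left hB (by positivity : 0 ≤ r * (p-1))
    have h5 : r * (p-1) * θ = (r-1)*p := by rw [hθ]; field_simp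
    linear_combination h4 + (s^r - 1) * h5
  have h6 := mul_le_mul_of_nonneg_right h3 hX
  have h7 := mul_le_mul_of_nonneg_left h2 hr0.le
  rw [ge_iff_le, div_mul_eq_mul_div, one_div, inv_mul_eq_div]
  apply div_le_div_of_nonneg_right _ hp0.le
  linear_combination h6 + h7
end

section
/- Let N ≥ 1, let p > 1 and r be real numbers with 1 ≤ r ≤ p, and let A : ℝ^N → ℝ be strictly convex, positively p-homogeneous, and differentiable on ℝ^N; set a(ξ) = (1/p) • ∇A(ξ). Then for every s > 0 and all ξ₁, ξ₂ ∈ ℝ^N one has ⟨a(ξ₁), ξ₁ − r·s^(1−r) • ξ₂ + (r−1)·s^(−r) • ξ₁⟩ + ⟨a(ξ₂), ξ₂ − r·s^(r−1) • ξ₁ + (r−1)·s^r • ξ₂⟩ ≥ 0. (Pointwise form of the Diaz–Saa inequality.) -/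
open Real
open scoped RealInnerProductSpace

lemma ds_grad_ineq {N : ℕ} (A : EuclideanSpace ℝ (Fin N) → ℝ) (hc : ConvexOn ℝ Set.univ A)
    (hd : Differentiable ℝ A) (x y : EuclideanSpace ℝ (Fin N)) :
    A x + ⟪gradient A x, y - x⟫ ≤ A y := by
  have hg : HasDerivAt (fun t : ℝ => A (AffineMap.lineMap x y t)) (⟪gradient A x, y - x⟫) 0 := by
    have h1 : HasDerivAt (fun t : ℝ => AffineMap.lineMap x y t) (y - x) (0:ℝ) :=
      AffineMap.hasDerivAt_lineMap
    have h2 : HasFDerivAt A (InnerProductSpace.toDual ℝ _ (gradient A x))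
        (AffineMap.lineMap x y (0:ℝ)) := by
      simpa using (hd x).hasGradientAt.hasFDerivAt
    exact h2.comp_hasDerivAt (0:ℝ) h1
  have hcg : ConvexOn ℝ Set.univ (fun t : ℝ => A (AffineMap.lineMap x y t)) :=
    hc.comp_affineMap (AffineMap.lineMap x y)
  have h := hcg.le_slope_of_hasDerivAt (Set.mem_univ 0) (Set.mem_univ 1) one_pos hg
  simp only [slope_def_field, AffineMap.lineMap_apply_one, AffineMap.lineMap_apply_zero, sub_zero,
    div_one] at h
  linarith

lemma ds_euler {N : ℕ} (p : ℝ) (A : EuclideanSpace ℝ (Fin N) → ℝ)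
    (hhom : ∀ t : ℝ, 0 ≤ t → ∀ ξ : EuclideanSpace ℝ (Fin N), A (t • ξ) = t ^ p * A ξ)
    (hd : Differentiable ℝ A) (x : EuclideanSpace ℝ (Fin N)) :
    ⟪gradient A x, x⟫ = p * A x := by
  have h1 : HasDerivAt (fun t : ℝ => t • x) x (1:ℝ) := by
    simpa using (hasDerivAt_id (1:ℝ)).smul_const x
  have h2 : HasFDerivAt A (InnerProductSpace.toDual ℝ _ (gradient A x)) ((1:ℝ) • x) := by
    simpa using (hd x).hasGradientAt.hasFDerivAt
  have h3 : HasDerivAt (fun t : ℝ => A (t • x)) (⟪gradient A x, x⟫) 1 := by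
    exact h2.comp_hasDerivAt (1:ℝ) h1
  have h4 : HasDerivAt (fun t : ℝ => t ^ p * A x) (p * A x) 1 := by
    simpa using (Real.hasDerivAt_rpow_const (x := 1) (p := p) (Or.inl one_ne_zero)).mul_const (A x)
  refine h3.unique (h4.congr_of_eventuallyEq ?_)
  filter_upwards [lt_mem_nhds (zero_lt_one (α := ℝ))] with t ht
  exact hhom t ht.le x

/-- one half of the scalar inequality -/
lemma ds_scalar (p r s a b : ℝ) (hr : 1 ≤ r) (hs : 0 < s) (ha : 0 < a) (hb : 0 < b) :
    r * s ^ (1 - r) * (a ^ (p - 1) * b) ≤ (r - 1) * s ^ (-r) * a ^ p + a ^ (p - r) * b ^ r := by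
  have ht : 0 < b * s / a := by positivity
  have hB := one_add_mul_self_le_rpow_one_add (s := b * s / a - 1) (by linarith) hr
  have e0 : 1 + (b * s / a - 1) = b * s / a := by ring
  rw [e0, Real.div_rpow (by positivity) ha.le, Real.mul_rpow hb.le hs.le] at hB
  have hM : 0 < a ^ p / s ^ r := by positivity
  have h := mul_le_mul_of_nonneg_left hB hM.le
  rw [Real.rpow_sub hs, Real.rpow_sub ha, Real.rpow_sub ha, Real.rpow_neg hs.le,
    Real.rpow_one, Real.rpow_one]
  have hsr : 0 < s ^ r := by positivity
  have har : 0 < a ^ r := by positivity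
  have e1 : a ^ p / s ^ r * (b ^ r * s ^ r / a ^ r) = a ^ p / a ^ r * b ^ r := by
    field_simp
  have e2 : a ^ p / s ^ r * (1 + r * (b * s / a - 1))
      = r * (s / s ^ r) * (a ^ p / a * b) - (r - 1) * (s ^ r)⁻¹ * a ^ p := by
    field_simp
    ring
  rw [e1, e2] at h
  linarith

lemma ds_rearr (p r a b : ℝ) (hr : 0 ≤ r) (hrp : r ≤ p) (ha : 0 < a) (hb : 0 < b) :
    a ^ (p - r) * b ^ r + b ^ (p - r) * a ^ r ≤ a ^ p + b ^ p := by
  have e : ∀ x : ℝ, 0 < x → x ^ p = x ^ (p - r) * x ^ r := fun x hx => by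
    rw [← Real.rpow_add hx]; simp
  rw [e a ha, e b hb]
  have hq : 0 ≤ p - r := by linarith
  rcases le_total a b with h | h
  · have h1 := Real.rpow_le_rpow ha.le h hr
    have h2 := Real.rpow_le_rpow ha.le h hq
    nlinarith [mul_nonneg (sub_nonneg.2 h1) (sub_nonneg.2 h2)]
  · have h1 := Real.rpow_le_rpow hb.le h hr
    have h2 := Real.rpow_le_rpow hb.le h hq
    nlinarith [mul_nonneg (sub_nonneg.2 h1) (sub_nonneg.2 h2)]

theorem diaz_saa_pointwise
    (N : ℕ) (hN : 1 ≤ N) (p r : ℝ) (hp : 1 < p) (hr : 1 ≤ r) (hrp : r ≤ p)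
    (A : EuclideanSpace ℝ (Fin N) → ℝ)
    (hconv : StrictConvexOn ℝ Set.univ A)
    (hhom : ∀ t : ℝ, 0 ≤ t → ∀ ξ : EuclideanSpace ℝ (Fin N), A (t • ξ) = t ^ p * A ξ)
    (hdiff : Differentiable ℝ A)
    (s : ℝ) (hs : 0 < s) (ξ₁ ξ₂ : EuclideanSpace ℝ (Fin N)) :
    ⟪(1/p) • gradient A ξ₁, ξ₁ - (r * s ^ (1 - r)) • ξ₂ + ((r - 1) * s ^ (-r)) • ξ₁⟫
      + ⟪(1/p) • gradient A ξ₂, ξ₂ - (r * s ^ (r - 1)) • ξ₁ + ((r - 1) * s ^ r) • ξ₂⟫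
      ≥ 0 := by
  have hp0 : 0 < p := by linarith
  have hE := ds_euler p A hhom hdiff
  have hG := ds_grad_ineq A hconv.convexOn hdiff
  have hA0 : A 0 = 0 := by
    have := hhom 0 le_rfl 0
    rwa [zero_smul, Real.zero_rpow hp0.ne', zero_mul] at this
  have hnn : ∀ x, 0 ≤ A x := fun x => by
    have h := hG x 0
    rw [zero_sub, inner_neg_right, hE, hA0] at h
    nlinarith
  have hpos : ∀ x, x ≠ 0 → 0 < A x := fun x hx => by
    have h := hconv.2 (Set.mem_univ x) (Set.mem_univ 0) hx
      (show (0:ℝ) < 1/2 by norm_num) (show (0:ℝ) < 1/2 by norm_num) (by norm_num)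
    have h' := hnn ((1/2 : ℝ) • x + (1/2 : ℝ) • 0)
    rw [hA0] at h
    simp only [smul_eq_mul] at h
    linarith
  have hg0 : gradient A 0 = 0 := by
    have : IsLocalMin A 0 := Filter.Eventually.of_forall fun x => by rw [hA0]; exact hnn x
    rw [gradient, this.fderiv_eq_zero, map_zero]
  -- Hoelder
  have hH : ∀ x y a b, 0 < a → 0 < b → A x = a ^ p → A y = b ^ p →
      1 / p * ⟪gradient A x, y⟫ ≤ a ^ (p - 1) * b := fun x y a b ha hb hx hy => by
    have h := hG x ((a / b) • y)
    rw [inner_sub_right, inner_smul_right, hE, hhom _ (by positivity), hx, hy,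
      Real.div_rpow ha.le hb.le, div_mul_cancel₀ _ (by positivity)] at h
    rw [Real.rpow_sub ha, Real.rpow_one]
    have h2 : (a / b) * ⟪gradient A x, y⟫ ≤ p * a ^ p := by linarith
    have h3 : 1 / p * ⟪gradient A x, y⟫ = (b / (a * p)) * ((a / b) * ⟪gradient A x, y⟫) := by
      field_simp
    have h4 : a ^ p / a * b = (b / (a * p)) * (p * a ^ p) := by field_simp
    rw [h3, h4]
    exact mul_le_mul_of_nonneg_left h2 (by positivity)
  simp only [inner_add_right, inner_sub_right, inner_smul_right, real_inner_smul_left, hE]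
  have e1 : ∀ z : ℝ, 1 / p * (p * z) = z := fun z => by field_simp
  simp only [e1]
  have hr1 : 0 ≤ r - 1 := by linarith
  have c1 : 0 < s ^ (-r) := by positivity
  have c2 : 0 < s ^ r := by positivity
  have n1 := mul_nonneg (mul_nonneg hr1 c1.le) (hnn ξ₁)
  have n2 := mul_nonneg (mul_nonneg hr1 c2.le) (hnn ξ₂)
  by_cases h1 : ξ₁ = 0
  · subst h1
    simp only [hg0, inner_zero_left, inner_zero_right, mul_zero]
    linarith [hnn 0, hnn ξ₂]
  by_cases h2 : ξ₂ = 0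
  · subst h2
    simp only [hg0, inner_zero_left, inner_zero_right, mul_zero]
    linarith [hnn 0, hnn ξ₁]
  have root : ∀ x, x ≠ 0 → ∃ a, 0 < a ∧ A x = a ^ p := fun x hx =>
    ⟨A x ^ (p⁻¹), Real.rpow_pos_of_pos (hpos x hx) _,
      (Real.rpow_inv_rpow (hnn x) hp0.ne').symm⟩
  obtain ⟨a, ha, hAa⟩ := root _ h1
  obtain ⟨b, hb, hAb⟩ := root _ h2
  have k1 := hH _ _ a b ha hb hAa hAb
  have k2 := hH _ _ b a hb ha hAb hAa
  have s1 := ds_scalar p r s a b hr hs ha hb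
  have s2 := ds_scalar p r s⁻¹ b a hr (by positivity) hb ha
  rw [Real.inv_rpow hs.le, Real.inv_rpow hs.le, ← Real.rpow_neg hs.le, ← Real.rpow_neg hs.le,
    neg_neg, neg_sub] at s2
  have s3 := ds_rearr p r a b (by linarith) hrp ha hb
  have m1 := mul_le_mul_of_nonneg_left k1 (show 0 ≤ r * s ^ (1 - r) by positivity)
  have m2 := mul_le_mul_of_nonneg_left k2 (show 0 ≤ r * s ^ (r - 1) by positivity)
  rw [hAa, hAb]
  linarith
end

section
/- Let N ≥ 1, let r ≥ 1 be a real number, and let M : ℝ^N → ℝ be convex and positively r-homogeneous. Then for every θ ∈ (0,1), all v₁, v₂ > 0 and all ξ₁, ξ₂ ∈ ℝ^N, setting v = (1−θ)v₁ + θv₂ and ξ = (1−θ) • ξ₁ + θ • ξ₂, one has M(ξ / (r·v^((r−1)/r))) ≤ (1−θ) · M(ξ₁ / (r·v₁^((r−1)/r))) + θ · M(ξ₂ / (r·v₂^((r−1)/r))). (Pointwise hidden convexity underlying Proposition 2.4.) -/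
open Real

theorem hidden_convexity_pointwise
    (N : ℕ) (hN : 1 ≤ N) (r : ℝ) (hr : 1 ≤ r)
    (M : EuclideanSpace ℝ (Fin N) → ℝ)
    (hconv : ConvexOn ℝ Set.univ M)
    (hhom : ∀ t : ℝ, 0 ≤ t → ∀ ξ : EuclideanSpace ℝ (Fin N), M (t • ξ) = t ^ r * M ξ) :
    ∀ θ ∈ Set.Ioo (0:ℝ) 1, ∀ v₁ v₂ : ℝ, 0 < v₁ → 0 < v₂ →
      ∀ ξ₁ ξ₂ : EuclideanSpace ℝ (Fin N),
      M ((r * ((1 - θ) * v₁ + θ * v₂) ^ ((r - 1)/r))⁻¹ • ((1 - θ) • ξ₁ + θ • ξ₂))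
        ≤ (1 - θ) * M ((r * v₁ ^ ((r - 1)/r))⁻¹ • ξ₁)
          + θ * M ((r * v₂ ^ ((r - 1)/r))⁻¹ • ξ₂) := by
  intro θ hθ v₁ v₂ h1 h2 ξ₁ ξ₂
  obtain ⟨hθ0, hθ1⟩ := hθ
  have hr0 : 0 < r := by linarith
  have key : ∀ w : ℝ, 0 < w → ∀ ξ : EuclideanSpace ℝ (Fin N),
      M ((r * w ^ ((r - 1)/r))⁻¹ • ξ) = (r ^ r)⁻¹ * (w * M (w⁻¹ • ξ)) := by
    intro w hw ξ
    have hp : 0 < w ^ ((r - 1)/r) := Real.rpow_pos_of_pos hw _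
    have hwr : 0 < w ^ r := Real.rpow_pos_of_pos hw _
    have hrr : 0 < r ^ r := Real.rpow_pos_of_pos hr0 _
    rw [hhom _ (by positivity), hhom _ (by positivity), Real.inv_rpow (by positivity),
      Real.inv_rpow hw.le, Real.mul_rpow hr0.le hp.le, ← Real.rpow_mul hw.le,
      div_mul_cancel₀ _ hr0.ne', Real.rpow_sub_one hw.ne']
    field_simp
  have ha : 0 < (1 - θ) * v₁ := mul_pos (by linarith) h1
  have hb : 0 < θ * v₂ := mul_pos hθ0 h2
  have hv : 0 < (1 - θ) * v₁ + θ * v₂ := by linarith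
  rw [key _ hv, key _ h1, key _ h2]
  generalize hvd : (1 - θ) * v₁ + θ * v₂ = v at *
  have hc := hconv.2 (Set.mem_univ (v₁⁻¹ • ξ₁)) (Set.mem_univ (v₂⁻¹ • ξ₂))
    (div_pos ha hv).le (div_pos hb hv).le
    (by rw [← add_div, hvd, div_self hv.ne'])
  have he : ((1 - θ) * v₁ / v) • (v₁⁻¹ • ξ₁) + (θ * v₂ / v) • (v₂⁻¹ • ξ₂)
      = v⁻¹ • ((1 - θ) • ξ₁ + θ • ξ₂) := by
    rw [smul_add, smul_smul, smul_smul, smul_smul, smul_smul]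
    congr 2 <;> field_simp
  rw [he] at hc
  simp only [smul_eq_mul] at hc
  have hm := mul_le_mul_of_nonneg_left hc hv.le
  have hrr : 0 ≤ (r ^ r)⁻¹ := by positivity
  have hm2 := mul_le_mul_of_nonneg_left hm hrr
  refine hm2.trans (le_of_eq ?_)
  field_simp
end

section
/- Let N ≥ 1 and let K : ℝ^N → ℝ be continuously differentiable on ℝ^N and twice continuously differentiable on ℝ^N \ {0}. Suppose there exist a real m > 1, constants γ > 0, Γ > 0 and k₁, k₂ ≥ 0 such that for all ξ ∈ ℝ^N \ {0} and all η ∈ ℝ^N: D²K(ξ)(η, η) ≥ γ·(k₁ + ‖ξ‖)^(m−2)·‖η‖² and the operator norm of D²K(ξ) is at most Γ·(k₂ + ‖ξ‖)^(m−2). Then there exist constants γ₁, γ₂ with 0 < γ₁ ≤ γ₂ < ∞ and nonnegative constants Γ₁, Γ₂ such that γ₁·‖ξ‖^m − Γ₁ ≤ K(ξ) ≤ γ₂·‖ξ‖^m + Γ₂ for all ξ ∈ ℝ^N \ {0}. -/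
open Real

theorem aux_ray (g g' g'' : ℝ → ℝ) (m a M : ℝ) (hm : 1 < m) (hM : 0 ≤ M)
    (h1 : ∀ t, 1 ≤ t → HasDerivAt g (g' t) t)
    (h2 : ∀ t, 1 ≤ t → HasDerivAt g' (g'' t) t)
    (h3 : ∀ t, 1 ≤ t → a * (m - 1) * t ^ (m - 2) ≤ g'' t)
    (hg : -M ≤ g 1) (hg' : -M ≤ g' 1) (t : ℝ) (ht : 1 ≤ t) :
    a / m * t ^ m - (M + |a|) * t - M ≤ g t := by
  have hd : ∀ p s : ℝ, 1 ≤ s → HasDerivAt (fun x : ℝ => x ^ p) (p * s ^ (p - 1)) s := by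
    intro p s hs
    exact Real.hasDerivAt_rpow_const (Or.inl (by linarith))
  have key : ∀ f f' : ℝ → ℝ, (∀ s, 1 ≤ s → HasDerivAt f (f' s) s) → (∀ s, 1 ≤ s → 0 ≤ f' s) →
      ∀ s, 1 ≤ s → f 1 ≤ f s := by
    intro f f' hf hf' s hs
    have : MonotoneOn f (Set.Ici 1) := by
      apply monotoneOn_of_hasDerivWithinAt_nonneg (f' := f') (convex_Ici 1)
      · intro x hx
        exact (hf x hx).continuousAt.continuousWithinAt
      · intro x hx
        exact (hf x (interior_subset hx)).hasDerivWithinAt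
      · intro x hx
        exact hf' x (interior_subset hx)
    exact this (Set.mem_Ici.2 le_rfl) hs hs
  have ha := le_abs_self a
  have hp : ∀ s, 1 ≤ s → -(M + |a|) ≤ g' s - a * s ^ (m - 1) := by
    intro s hs
    have := key (fun x => g' x - a * x ^ (m - 1)) (fun x => g'' x - a * ((m - 1) * x ^ (m - 1 - 1)))
      (fun x hx => (h2 x hx).sub ((hd (m - 1) x hx).const_mul a))
      (fun x hx => by
        have := h3 x hx
        have e : m - 1 - 1 = m - 2 := by ring
        simp only [e]
        linarith) s hs
    simp only [one_rpow] at this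
    linarith
  have hm0 : m ≠ 0 := by linarith
  have := key (fun x => g x - a / m * x ^ m + (M + |a|) * x)
      (fun x => g' x - a / m * (m * x ^ (m - 1)) + (M + |a|) * 1)
      (fun x hx => ((h1 x hx).sub ((hd m x hx).const_mul (a / m))).add
        ((hasDerivAt_id x).const_mul (M + |a|)))
      (fun x hx => by
        have := hp x hx
        have e : a / m * (m * x ^ (m - 1)) = a * x ^ (m - 1) := by field_simp
        simp only [e]
        linarith) t ht
  simp only [one_rpow] at this
  have h4 : a / m ≤ |a| := by
    rw [div_le_iff₀ (by linarith)]
    nlinarith [abs_nonneg a]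
  linarith

theorem aux_absorb (m C e : ℝ) (hm : 1 < m) (hC : 0 ≤ C) (he : 0 < e) :
    ∃ D, 0 ≤ D ∧ ∀ t : ℝ, 1 ≤ t → C * t ≤ e * t ^ m + D := by
  refine ⟨C * (C / e) ^ (1 / (m - 1)), by positivity, fun t ht => ?_⟩
  have ht0 : 0 < t := by linarith
  have hm1 : 0 < m - 1 := by linarith
  by_cases h : C / e ≤ t ^ (m - 1)
  · have h1 : C ≤ e * t ^ (m - 1) := by
      rw [div_le_iff₀ he] at h; linarith
    have h2 : t ^ m = t ^ (m - 1) * t := by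
      rw [← Real.rpow_add_one ht0.ne']; ring_nf
    have h3 : 0 ≤ C * (C / e) ^ (1 / (m - 1)) := by positivity
    rw [h2]
    nlinarith
  · push Not at h
    have h1 : t ≤ (C / e) ^ (1 / (m - 1)) := by
      have := Real.rpow_le_rpow (by positivity) h.le (z := 1 / (m - 1)) (by positivity)
      rwa [← Real.rpow_mul ht0.le, mul_one_div_cancel hm1.ne', Real.rpow_one] at this
    have h3 : 0 ≤ e * t ^ m := by positivity
    nlinarith

theorem aux_cmp (k p : ℝ) (hk : 0 ≤ k) :
    ∃ c d : ℝ, 0 < c ∧ 0 < d ∧ ∀ t : ℝ, 1 ≤ t →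
      c * t ^ p ≤ (k + t) ^ p ∧ (k + t) ^ p ≤ d * t ^ p := by
  have h1k : 0 < 1 + k := by linarith
  refine ⟨min 1 ((1 + k) ^ p), max 1 ((1 + k) ^ p), by positivity, by positivity, ?_⟩
  intro t ht
  have ht0 : 0 < t := by linarith
  have htp : 0 < t ^ p := by positivity
  have hl : t ≤ k + t := by linarith
  have hu : k + t ≤ (1 + k) * t := by nlinarith
  have hmul : ((1 + k) * t) ^ p = (1 + k) ^ p * t ^ p := Real.mul_rpow h1k.le ht0.le
  have m1 := mul_le_mul_of_nonneg_right (min_le_left 1 ((1 + k) ^ p)) htp.le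
  have m2 := mul_le_mul_of_nonneg_right (min_le_right 1 ((1 + k) ^ p)) htp.le
  have m3 := mul_le_mul_of_nonneg_right (le_max_left 1 ((1 + k) ^ p)) htp.le
  have m4 := mul_le_mul_of_nonneg_right (le_max_right 1 ((1 + k) ^ p)) htp.le
  rcases le_total 0 p with hp | hp
  · have a1 := Real.rpow_le_rpow ht0.le hl hp
    have a2 := Real.rpow_le_rpow (by linarith) hu hp
    constructor <;> linarith
  · have a1 := Real.rpow_le_rpow_of_nonpos ht0 hl hp
    have a2 := Real.rpow_le_rpow_of_nonpos (by linarith) hu hp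
    constructor <;> linarith

theorem growth_estimate_from_ellipticity
    (N : ℕ) (hN : 1 ≤ N)
    (K : EuclideanSpace ℝ (Fin N) → ℝ)
    (hK1 : ContDiff ℝ 1 K)
    (hK2 : ContDiffOn ℝ 2 K {(0 : EuclideanSpace ℝ (Fin N))}ᶜ)
    (m : ℝ) (hm : 1 < m)
    (γ Γ : ℝ) (hγ : 0 < γ) (hΓ : 0 < Γ)
    (k₁ k₂ : ℝ) (hk₁ : 0 ≤ k₁) (hk₂ : 0 ≤ k₂)
    (hell : ∀ ξ : EuclideanSpace ℝ (Fin N), ξ ≠ 0 → ∀ η : EuclideanSpace ℝ (Fin N),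
      γ * (k₁ + ‖ξ‖) ^ (m - 2) * ‖η‖ ^ 2 ≤ fderiv ℝ (fderiv ℝ K) ξ η η)
    (hgrowth : ∀ ξ : EuclideanSpace ℝ (Fin N), ξ ≠ 0 →
      ‖fderiv ℝ (fderiv ℝ K) ξ‖ ≤ Γ * (k₂ + ‖ξ‖) ^ (m - 2)) :
    ∃ γ₁ γ₂ Γ₁ Γ₂ : ℝ, 0 < γ₁ ∧ γ₁ ≤ γ₂ ∧ 0 ≤ Γ₁ ∧ 0 ≤ Γ₂ ∧
      ∀ ξ : EuclideanSpace ℝ (Fin N), ξ ≠ 0 →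
        γ₁ * ‖ξ‖ ^ m - Γ₁ ≤ K ξ ∧ K ξ ≤ γ₂ * ‖ξ‖ ^ m + Γ₂ := by
  obtain ⟨c, _, hc, _, hcd⟩ := aux_cmp k₁ (m - 2) hk₁
  obtain ⟨_, d, _, hd, hcd'⟩ := aux_cmp k₂ (m - 2) hk₂
  have hm1 : 0 < m - 1 := by linarith
  have hm0 : 0 < m := by linarith
  obtain ⟨M₁, hM₁⟩ := (isCompact_closedBall (0 : EuclideanSpace ℝ (Fin N)) 1).exists_bound_of_continuousOn
    hK1.continuous.continuousOn
  obtain ⟨M₂, hM₂⟩ := (isCompact_closedBall (0 : EuclideanSpace ℝ (Fin N)) 1).exists_bound_of_continuousOn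
    (hK1.continuous_fderiv one_ne_zero).continuousOn
  set M := max M₁ M₂ with hMdef
  have hM0 : 0 ≤ M := le_trans (norm_nonneg _) ((hM₁ 0 (by simp)).trans (le_max_left _ _))
  set a := γ * c / (m - 1) with hadef
  set b := Γ * d / (m - 1) with hbdef
  have ha : 0 < a := by positivity
  have hb : 0 < b := by positivity
  have hae : a * (m - 1) = γ * c := by rw [hadef]; field_simp
  have hbe : b * (m - 1) = Γ * d := by rw [hbdef]; field_simp
  have ray : ∀ u : EuclideanSpace ℝ (Fin N), ‖u‖ = 1 → ∀ t : ℝ, 1 ≤ t →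
      a / m * t ^ m - (M + a) * t - M ≤ K (t • u) ∧
      K (t • u) ≤ b / m * t ^ m + (M + b) * t + M := by
    intro u hu t ht
    have hu0 : u ≠ 0 := by
      intro h; simp [h] at hu
    have hne : ∀ s : ℝ, 1 ≤ s → s • u ≠ 0 := fun s hs => smul_ne_zero (by linarith) hu0
    have hns : ∀ s : ℝ, 1 ≤ s → ‖s • u‖ = s := by
      intro s hs
      rw [norm_smul, hu, mul_one, Real.norm_of_nonneg (by linarith)]
    have hlin : ∀ s : ℝ, HasDerivAt (fun x : ℝ => x • u) u s := fun s => by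
      simpa using (hasDerivAt_id s).smul_const u
    have h1 : ∀ s : ℝ, 1 ≤ s → HasDerivAt (fun x : ℝ => K (x • u)) (fderiv ℝ K (s • u) u) s := by
      intro s _
      exact ((hK1.differentiable one_ne_zero (s • u)).hasFDerivAt).comp_hasDerivAt s (hlin s)
    have h2 : ∀ s : ℝ, 1 ≤ s → HasDerivAt (fun x : ℝ => fderiv ℝ K (x • u) u)
        (fderiv ℝ (fderiv ℝ K) (s • u) u u) s := by
      intro s hs
      have hcd2 : ContDiffAt ℝ 2 K (s • u) :=
        hK2.contDiffAt (isOpen_compl_singleton.mem_nhds (hne s hs))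
      have hdf : DifferentiableAt ℝ (fderiv ℝ K) (s • u) :=
        (hcd2.fderiv_right (m := 1) (by norm_num)).differentiableAt one_ne_zero
      have h := hdf.hasFDerivAt.comp_hasDerivAt s (hlin s)
      simpa using h.clm_apply (hasDerivAt_const s u)
    have hub : u ∈ Metric.closedBall (0 : EuclideanSpace ℝ (Fin N)) 1 := by simp [hu]
    have hb1 : |K u| ≤ M := (hM₁ u hub).trans (le_max_left _ _)
    have hb2 : |fderiv ℝ K u u| ≤ M := by
      have h := (fderiv ℝ K u).le_opNorm u
      rw [hu, mul_one] at h
      exact h.trans ((hM₂ u hub).trans (le_max_right _ _))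
    rw [abs_le] at hb1 hb2
    constructor
    · have := aux_ray _ _ _ m a M hm hM0 h1 h2 (fun s hs => by
        have h := hell (s • u) (hne s hs) u
        rw [hns s hs, hu] at h
        have h' := mul_le_mul_of_nonneg_left (hcd s hs).1 hγ.le
        rw [hae]
        linarith) (by simpa using hb1.1) (by simpa using hb2.1) t ht
      rwa [abs_of_pos ha] at this
    · have := aux_ray _ _ _ m (-b) M hm hM0 (fun s hs => (h1 s hs).neg) (fun s hs => (h2 s hs).neg)
        (fun s hs => by
        have h := hgrowth (s • u) (hne s hs)
        rw [hns s hs] at h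
        have h' := mul_le_mul_of_nonneg_left (hcd' s hs).2 hΓ.le
        have h3 := (fderiv ℝ (fderiv ℝ K) (s • u)).le_opNorm₂ u u
        rw [hu, mul_one, mul_one] at h3
        have h4 := (le_abs_self _).trans h3
        have e : -b * (m - 1) = - (Γ * d) := by rw [← hbe]; ring
        rw [e]
        linarith) (by simpa using hb1.2) (by simpa using hb2.2) t ht
      rw [abs_neg, abs_of_pos hb, neg_div] at this
      simp only [Pi.neg_apply] at this
      linarith
  obtain ⟨D, hD, hDt⟩ := aux_absorb m (M + a) (a / m / 2) hm (by positivity) (by positivity)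
  refine ⟨a / m / 2, max (a / m / 2) (b / m + (M + b)), D + M + a / m / 2, M, by positivity,
    le_max_left _ _, by positivity, hM0, ?_⟩
  intro ξ hξ
  have hpos : 0 < ‖ξ‖ := norm_pos_iff.2 hξ
  have hpm : 0 ≤ ‖ξ‖ ^ m := by positivity
  have ham : 0 < a / m / 2 := by positivity
  have hmx := mul_le_mul_of_nonneg_right (le_max_right (a / m / 2) (b / m + (M + b))) hpm
  have hmx' := mul_le_mul_of_nonneg_right (le_max_left (a / m / 2) (b / m + (M + b))) hpm
  rcases le_total ‖ξ‖ 1 with h | h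
  · have hKb : |K ξ| ≤ M := (hM₁ ξ (by simpa using h)).trans (le_max_left _ _)
    rw [abs_le] at hKb
    have h1 : ‖ξ‖ ^ m ≤ 1 := Real.rpow_le_one hpos.le h hm0.le
    have h2 := mul_le_mul_of_nonneg_left h1 ham.le
    have h3 := mul_nonneg ham.le hpm
    constructor <;> linarith
  · obtain ⟨r1, r2⟩ := ray (‖ξ‖⁻¹ • ξ) (by
      rw [norm_smul, norm_inv, norm_norm, inv_mul_cancel₀ hpos.ne']) ‖ξ‖ h
    rw [smul_smul, mul_inv_cancel₀ hpos.ne', one_smul] at r1 r2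
    have h1 := hDt _ h
    have h2 : ‖ξ‖ ≤ ‖ξ‖ ^ m := Real.self_le_rpow_of_one_le h hm.le
    have h3 := mul_le_mul_of_nonneg_left h2 (show 0 ≤ M + b by positivity)
    constructor <;> linarith
end

section
/- Let N ≥ 1 and for each i ∈ {1,…,N} let B_i : ℝ → ℝ be strictly convex, positively p_i-homogeneous with p_i > 1, and differentiable, with b_i(s) = (1/p_i)·B_i'(s). Let r be real with 1 ≤ r ≤ p_i for all i, and let s > 0 and ξ₁, ξ₂ : Fin N → ℝ. Then ∑_{i=1}^N [ b_i(ξ₁(i))·(ξ₁(i) − r·s^(1−r)·ξ₂(i) + (r−1)·s^(−r)·ξ₁(i)) + b_i(ξ₂(i))·(ξ₂(i) − r·s^(r−1)·ξ₁(i) + (r−1)·s^r·ξ₂(i)) ] ≥ 0. (Pointwise form of the anisotropic Diaz–Saa inequality.) -/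
open Real

theorem aux_young (r x y : ℝ) (hr : 1 ≤ r) (hx : 0 ≤ x) (hy : 0 ≤ y) :
    r * (x ^ (r - 1) * y) ≤ (r - 1) * x ^ r + y ^ r := by
  have hr0 : 0 < r := by linarith
  have h := Real.geom_mean_le_arith_mean2_weighted (w₁ := (r - 1) / r) (w₂ := 1 / r)
    (p₁ := x ^ r) (p₂ := y ^ r) (div_nonneg (by linarith) hr0.le) (by positivity)
    (by positivity) (by positivity) (by field_simp; ring)
  rw [← Real.rpow_mul hx, ← Real.rpow_mul hy] at h
  rw [show r * ((r - 1) / r) = r - 1 by field_simp, show r * (1 / r) = 1 by field_simp,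
    Real.rpow_one] at h
  have h2 := mul_le_mul_of_nonneg_left h hr0.le
  have h3 : r * ((r - 1) / r * x ^ r + 1 / r * y ^ r) = (r - 1) * x ^ r + y ^ r := by
    field_simp
  linarith

theorem aux_half (p r s a b : ℝ) (hr : 1 ≤ r) (hrp : r ≤ p) (hs : 0 < s)
    (ha : 0 ≤ a) (hb : 0 ≤ b) :
    r * s ^ (1 - r) * (a ^ (p - 1) * b) ≤
      (r - 1) * s ^ (-r) * a ^ p + a ^ (p - r) * b ^ r := by
  have h := aux_young r (a / s) b hr (by positivity) hb
  rw [Real.div_rpow ha hs.le, Real.div_rpow ha hs.le] at h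
  have e1 : s ^ (1 - r) = (s ^ (r - 1))⁻¹ := by
    rw [← Real.rpow_neg hs.le]; congr 1; ring
  have e2 : s ^ (-r) = (s ^ r)⁻¹ := Real.rpow_neg hs.le r
  have e3 : a ^ (p - 1) = a ^ (p - r) * a ^ (r - 1) := by
    rw [← Real.rpow_add_of_nonneg ha (by linarith) (by linarith)]; congr 1; ring
  have e4 : a ^ p = a ^ (p - r) * a ^ r := by
    rw [← Real.rpow_add_of_nonneg ha (by linarith) (by linarith)]; congr 1; ring
  have h2 := mul_le_mul_of_nonneg_left h (Real.rpow_nonneg ha (p - r))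
  rw [e1, e2, e3, e4]
  simp only [div_eq_mul_inv] at h2
  linarith

theorem aux_mono (p r a b : ℝ) (hr : 1 ≤ r) (hrp : r ≤ p)
    (ha : 0 ≤ a) (hb : 0 ≤ b) :
    0 ≤ (a ^ (p - r) - b ^ (p - r)) * (a ^ r - b ^ r) := by
  rcases le_total a b with h | h
  · apply mul_nonneg_of_nonpos_of_nonpos
    · linarith [Real.rpow_le_rpow ha h (by linarith : 0 ≤ p - r)]
    · linarith [Real.rpow_le_rpow ha h (by linarith : 0 ≤ r)]
  · apply mul_nonneg
    · linarith [Real.rpow_le_rpow hb h (by linarith : 0 ≤ p - r)]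
    · linarith [Real.rpow_le_rpow hb h (by linarith : 0 ≤ r)]

theorem aux_zero (p : ℝ) (hp : 1 < p) (B : ℝ → ℝ)
    (hhom : ∀ t : ℝ, 0 ≤ t → ∀ s : ℝ, B (t * s) = t ^ p * B s) : B 0 = 0 := by
  have := hhom 0 le_rfl 0
  rw [Real.zero_rpow (by linarith)] at this
  simpa using this

theorem aux_pos_s18 (p : ℝ) (hp : 1 < p) (B : ℝ → ℝ) (hconv : StrictConvexOn ℝ Set.univ B)
    (hhom : ∀ t : ℝ, 0 ≤ t → ∀ s : ℝ, B (t * s) = t ^ p * B s) (x : ℝ) (hx : x ≠ 0) :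
    0 < B x := by
  have h0 := aux_zero p hp B hhom
  have h := hconv.2 (Set.mem_univ x) (Set.mem_univ 0) hx
    (by norm_num : (0 : ℝ) < 1 / 2) (by norm_num : (0 : ℝ) < 1 / 2) (by norm_num)
  simp only [smul_eq_mul, mul_zero, add_zero, h0] at h
  rw [hhom _ (by norm_num)] at h
  have h2 : (1/2 : ℝ) ^ p < (1/2 : ℝ) ^ (1 : ℝ) :=
    Real.rpow_lt_rpow_of_exponent_gt (by norm_num) (by norm_num) hp
  rw [Real.rpow_one] at h2
  nlinarith

theorem aux_euler_s18 (p : ℝ) (B : ℝ → ℝ)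
    (hhom : ∀ t : ℝ, 0 ≤ t → ∀ s : ℝ, B (t * s) = t ^ p * B s)
    (hdiff : Differentiable ℝ B) (x : ℝ) : deriv B x * x = p * B x := by
  have h1 : HasDerivAt (fun t : ℝ => B (t * x)) (deriv B x * x) 1 := by
    have hB : HasDerivAt B (deriv B x) (1 * x) := by
      rw [one_mul]; exact (hdiff x).hasDerivAt
    have := hB.comp (1 : ℝ) ((hasDerivAt_id (1 : ℝ)).mul_const x)
    simpa [Function.comp_def] using this
  have h2 : HasDerivAt (fun t : ℝ => t ^ p * B x) (p * B x) 1 := by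
    have := (Real.hasDerivAt_rpow_const (x := 1) (p := p) (Or.inl one_ne_zero)).mul_const (B x)
    simpa using this
  have h3 : (fun t : ℝ => B (t * x)) =ᶠ[nhds 1] (fun t : ℝ => t ^ p * B x) := by
    filter_upwards [lt_mem_nhds (zero_lt_one' ℝ)] with t ht
    exact hhom t ht.le x
  exact h1.unique (h2.congr_of_eventuallyEq h3)

theorem aux_tangent (B : ℝ → ℝ) (hconv : StrictConvexOn ℝ Set.univ B)
    (hdiff : Differentiable ℝ B) (x z : ℝ) : deriv B x * (z - x) ≤ B z - B x := by
  rcases lt_trichotomy x z with h | h | h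
  · have := hconv.convexOn.deriv_le_slope (Set.mem_univ x) (Set.mem_univ z) h (hdiff x)
    rw [slope_def_field, le_div_iff₀ (by linarith)] at this
    exact this
  · simp [h]
  · have := hconv.convexOn.slope_le_deriv (Set.mem_univ z) (Set.mem_univ x) h (hdiff x)
    rw [slope_def_field, div_le_iff₀ (by linarith)] at this
    linarith

theorem aux_holder (p : ℝ) (hp : 1 < p) (B : ℝ → ℝ) (hconv : StrictConvexOn ℝ Set.univ B)
    (hhom : ∀ t : ℝ, 0 ≤ t → ∀ s : ℝ, B (t * s) = t ^ p * B s)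
    (hdiff : Differentiable ℝ B) (u w a b : ℝ) (ha : 0 ≤ a) (hb : 0 ≤ b)
    (hau : a ^ p = B u) (hbw : b ^ p = B w) :
    1 / p * deriv B u * w ≤ a ^ (p - 1) * b := by
  have h0 := aux_zero p hp B hhom
  by_cases hw : w = 0
  · subst hw; rw [mul_zero]; positivity
  by_cases hu : u = 0
  · have : deriv B u = 0 := by
      apply IsLocalMin.deriv_eq_zero
      filter_upwards with x
      rw [hu, h0]
      by_cases hx : x = 0
      · rw [hx, h0]
      · exact (aux_pos_s18 p hp B hconv hhom x hx).le
    rw [this]; simp; positivity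
  have hBu := aux_pos_s18 p hp B hconv hhom u hu
  have hBw := aux_pos_s18 p hp B hconv hhom w hw
  have ha' : 0 < a := by
    rcases ha.eq_or_lt with h | h
    · rw [← h, Real.zero_rpow (by linarith)] at hau; linarith
    · exact h
  have hb' : 0 < b := by
    rcases hb.eq_or_lt with h | h
    · rw [← h, Real.zero_rpow (by linarith)] at hbw; linarith
    · exact h
  have ht := aux_tangent B hconv hdiff u (a / b * w)
  have he := aux_euler_s18 p B hhom hdiff u
  rw [hhom _ (by positivity), Real.div_rpow ha hb, hbw, hau, div_mul_cancel₀ _ hBw.ne',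
    mul_sub, he, ← hau] at ht
  have e : a ^ p = a ^ (p - 1) * a := by
    rw [Real.rpow_sub_one ha'.ne']; field_simp
  rw [e] at ht
  have h3 : a / b * (deriv B u * w) ≤ a / b * (p * (a ^ (p - 1) * b)) := by
    have : a / b * (p * (a ^ (p - 1) * b)) = p * (a ^ (p - 1) * a) := by field_simp
    rw [this]; linarith
  have h4 := le_of_mul_le_mul_left h3 (by positivity)
  rw [one_div, mul_assoc, inv_mul_le_iff₀ (by linarith)]
  exact h4

theorem aux_main (p : ℝ) (hp : 1 < p) (B : ℝ → ℝ) (hconv : StrictConvexOn ℝ Set.univ B)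
    (hhom : ∀ t : ℝ, 0 ≤ t → ∀ s : ℝ, B (t * s) = t ^ p * B s)
    (hdiff : Differentiable ℝ B) (r : ℝ) (hr : 1 ≤ r) (hrp : r ≤ p)
    (s : ℝ) (hs : 0 < s) (u w : ℝ) :
    0 ≤ (1 / p) * deriv B u * (u - r * s ^ (1 - r) * w + (r - 1) * s ^ (-r) * u)
        + (1 / p) * deriv B w * (w - r * s ^ (r - 1) * u + (r - 1) * s ^ r * w) := by
  have hnn : ∀ x, 0 ≤ B x := fun x => by
    by_cases hx : x = 0
    · rw [hx, aux_zero p hp B hhom]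
    · exact (aux_pos_s18 p hp B hconv hhom x hx).le
  have hrt : ∀ x, ∃ a, 0 ≤ a ∧ a ^ p = B x := fun x =>
    ⟨B x ^ (1 / p), Real.rpow_nonneg (hnn x) _, by
      rw [← Real.rpow_mul (hnn x), one_div_mul_cancel (by linarith), Real.rpow_one]⟩
  obtain ⟨a, ha, hau⟩ := hrt u
  obtain ⟨b, hb, hbw⟩ := hrt w
  have h1 := aux_holder p hp B hconv hhom hdiff u w a b ha hb hau hbw
  have h2 := aux_holder p hp B hconv hhom hdiff w u b a hb ha hbw hau
  have k1 := aux_half p r s a b hr hrp hs ha hb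
  have k2 := aux_half p r s⁻¹ b a hr hrp (by positivity) hb ha
  rw [Real.inv_rpow hs.le, Real.inv_rpow hs.le, ← Real.rpow_neg hs.le, ← Real.rpow_neg hs.le,
    neg_neg, neg_sub] at k2
  have m := aux_mono p r a b hr hrp ha hb
  have e : ∀ x : ℝ, 0 ≤ x → x ^ p = x ^ (p - r) * x ^ r := fun x hx => by
    rw [← Real.rpow_add_of_nonneg hx (by linarith) (by linarith)]; congr 1; ring
  have ea := e a ha
  have eb := e b hb
  have eu : 1 / p * deriv B u * u = a ^ p := by
    rw [mul_assoc, aux_euler_s18 p B hhom hdiff u, hau]; field_simp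
  have ew : 1 / p * deriv B w * w = b ^ p := by
    rw [mul_assoc, aux_euler_s18 p B hhom hdiff w, hbw]; field_simp
  have l1 := mul_le_mul_of_nonneg_left h1 (by positivity : 0 ≤ r * s ^ (1 - r))
  have l2 := mul_le_mul_of_nonneg_left h2 (by positivity : 0 ≤ r * s ^ (r - 1))
  generalize 1 / p * deriv B u = c at *
  generalize 1 / p * deriv B w = d at *
  have E : c * (u - r * s ^ (1 - r) * w + (r - 1) * s ^ (-r) * u)
        + d * (w - r * s ^ (r - 1) * u + (r - 1) * s ^ r * w)
      = c * u + (r - 1) * s ^ (-r) * (c * u) - r * s ^ (1 - r) * (c * w)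
        + (d * w + (r - 1) * s ^ r * (d * w) - r * s ^ (r - 1) * (d * u)) := by ring
  rw [E, eu, ew]
  linarith

theorem diaz_saa_anisotropic_pointwise
    (N : ℕ) (hN : 1 ≤ N) (p : Fin N → ℝ) (hp : ∀ i, 1 < p i)
    (B : Fin N → ℝ → ℝ)
    (hconv : ∀ i, StrictConvexOn ℝ Set.univ (B i))
    (hhom : ∀ i, ∀ t : ℝ, 0 ≤ t → ∀ s : ℝ, B i (t * s) = t ^ (p i) * B i s)
    (hdiff : ∀ i, Differentiable ℝ (B i))
    (r : ℝ) (hr : 1 ≤ r) (hrp : ∀ i, r ≤ p i)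
    (s : ℝ) (hs : 0 < s) (ξ₁ ξ₂ : Fin N → ℝ) :
    0 ≤ ∑ i : Fin N,
      ((1 / p i) * deriv (B i) (ξ₁ i) *
          (ξ₁ i - r * s ^ (1 - r) * ξ₂ i + (r - 1) * s ^ (-r) * ξ₁ i)
        + (1 / p i) * deriv (B i) (ξ₂ i) *
          (ξ₂ i - r * s ^ (r - 1) * ξ₁ i + (r - 1) * s ^ r * ξ₂ i)) := by
  exact Finset.sum_nonneg fun i _ => aux_main (p i) (hp i) (B i) (hconv i) (hhom i) (hdiff i)
    r hr (hrp i) s hs (ξ₁ i) (ξ₂ i)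
end
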